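/- arXiv:1511.05671 — 3 statements merged into one kernel-verified Lean document; each statement's English description precedes it below -/
import Mathlib

section
/- For every positive integer m, the vector w ∈ ℝ^m with entries w_k = √(2/(m+1/2)) · cos( (m−k+1/2)π/(2m+1) ), k = 1,…,m, satisfies ∑_{k=1}^m w_k > √(2m+1)/π. -/
open Matrix Finset

noncomputable def l2norm {n : Type*} [Fintype n] (v : n → ℂ) : ℝ :=
  Real.sqrt (∑ i, Complex.normSq (v i))

noncomputable def l2normR {n : Type*} [Fintype n] (v : n → ℝ) : ℝ :=
  Real.sqrt (∑ i, (v i) ^ 2)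

/-- Smallest singular value of a matrix, as the infimum of `‖M x‖₂` over unit vectors `x`. -/
noncomputable def sigmaMin {m n : Type*} [Fintype m] [Fintype n] (M : Matrix m n ℂ) : ℝ :=
  sInf {t : ℝ | ∃ x : n → ℂ, l2norm x = 1 ∧ t = l2norm (M.mulVec x)}

/-- Largest singular value (= spectral norm) of a matrix. -/
noncomputable def sigmaMax {m n : Type*} [Fintype m] [Fintype n] (M : Matrix m n ℂ) : ℝ :=
  sSup {t : ℝ | ∃ x : n → ℂ, l2norm x = 1 ∧ t = l2norm (M.mulVec x)}

/-- Probability of an event under the uniform distribution on a finite type. -/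
noncomputable def unifProb {α : Type*} [Fintype α] (P : α → Prop) : ℝ :=
  (Nat.card {a : α // P a} : ℝ) / (Fintype.card α : ℝ)

/-- Expectation of a real random variable under the uniform distribution on a finite type. -/
noncomputable def unifExp {α : Type*} [Fintype α] (f : α → ℝ) : ℝ :=
  (∑ a, f a) / (Fintype.card α : ℝ)

/-- The first-order difference matrix. -/
def Dmat (m : ℕ) : Matrix (Fin m) (Fin m) ℝ :=
  Matrix.of fun i j => if i = j then 1 else if (j : ℕ) + 1 = (i : ℕ) then -1 else 0

noncomputable def DmatC (m : ℕ) : Matrix (Fin m) (Fin m) ℂ := (Dmat m).map Complex.ofReal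

/-- The harmonic frame with frequencies `ω`. -/
noncomputable def harmonicFrame (N k : ℕ) (ω : Fin k → Fin N) : Matrix (Fin N) (Fin k) ℂ :=
  Matrix.of fun j t => Complex.exp (2 * Real.pi * Complex.I * ((ω t : ℕ) : ℂ) * ((j : ℕ) : ℂ) / N)

/-- The (unnormalized) DFT matrix. -/
noncomputable def dftMatrix (N : ℕ) : Matrix (Fin N) (Fin N) ℂ :=
  Matrix.of fun j t => Complex.exp (2 * Real.pi * Complex.I * ((j : ℕ) : ℂ) * ((t : ℕ) : ℂ) / N)

/-- Rounding to the nearest point of the lattice `δℤ + iδℤ`. -/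
noncomputable def roundLattice (δ : ℝ) (c : ℂ) : ℂ :=
  ⟨δ * ((round (c.re / δ) : ℤ) : ℝ), δ * ((round (c.im / δ) : ℤ) : ℝ)⟩

/-- State variables `u_i` of the `r`-th order ΣΔ quantizer with step `δ` run on input `y`
(with `y` indexed from time `1`; `u` at times `≤ 0` equals `0`). -/
noncomputable def sdState (δ : ℝ) (r : ℕ) (y : ℕ → ℂ) : ℕ → ℂ := fun n =>
  Nat.strongRecOn n (fun i ih =>
    if hi : i = 0 then 0
    else
      let w := y i + ∑ j ∈ Finset.Icc 1 r, ((-1 : ℂ)) ^ (j - 1) * (r.choose j : ℂ) *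
        (if h : 1 ≤ j then ih (i - j) (Nat.sub_lt (Nat.pos_of_ne_zero hi) h) else 0)
      w - roundLattice δ w)

/-- Output `q_i` of the `r`-th order ΣΔ quantizer. -/
noncomputable def sdQ (δ : ℝ) (r : ℕ) (y : ℕ → ℂ) (i : ℕ) : ℂ :=
  roundLattice δ (y i + ∑ j ∈ Finset.Icc 1 r, ((-1 : ℂ)) ^ (j - 1) * (r.choose j : ℂ) *
    sdState δ r y (i - j))

/-- Extension of a finite sequence `y : Fin m → ℂ` to time indices `1, …, m` (zero elsewhere). -/
def yExt {m : ℕ} (y : Fin m → ℂ) : ℕ → ℂ := fun i =>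
  if h : 1 ≤ i ∧ i ≤ m then y ⟨i - 1, by omega⟩ else 0

/-- The `r`-th order ΣΔ quantization of a finite sequence of complex measurements. -/
noncomputable def sdQuant (δ : ℝ) (r : ℕ) {m : ℕ} (y : Fin m → ℂ) : Fin m → ℂ :=
  fun i => sdQ δ r (yExt y) ((i : ℕ) + 1)

/-- Rounding to the nearest point of `δℤ`. -/
noncomputable def roundR (δ : ℝ) (x : ℝ) : ℝ := δ * ((round (x / δ) : ℤ) : ℝ)

noncomputable def sdStateR (δ : ℝ) (r : ℕ) (y : ℕ → ℝ) : ℕ → ℝ := fun n =>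
  Nat.strongRecOn n (fun i ih =>
    if hi : i = 0 then 0
    else
      let w := y i + ∑ j ∈ Finset.Icc 1 r, ((-1 : ℝ)) ^ (j - 1) * (r.choose j : ℝ) *
        (if h : 1 ≤ j then ih (i - j) (Nat.sub_lt (Nat.pos_of_ne_zero hi) h) else 0)
      w - roundR δ w)

noncomputable def sdQR (δ : ℝ) (r : ℕ) (y : ℕ → ℝ) (i : ℕ) : ℝ :=
  roundR δ (y i + ∑ j ∈ Finset.Icc 1 r, ((-1 : ℝ)) ^ (j - 1) * (r.choose j : ℝ) *
    sdStateR δ r y (i - j))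

def yExtR {m : ℕ} (y : Fin m → ℝ) : ℕ → ℝ := fun i =>
  if h : 1 ≤ i ∧ i ≤ m then y ⟨i - 1, by omega⟩ else 0

/-- The `r`-th order ΣΔ quantization of a finite sequence of real measurements. -/
noncomputable def sdQuantR (δ : ℝ) (r : ℕ) {m : ℕ} (y : Fin m → ℝ) : Fin m → ℝ :=
  fun i => sdQR δ r (yExtR y) ((i : ℕ) + 1)

/-!
With `t = π / (2m + 1)` the angles are `t/2, 3t/2, …, (m - 1/2)t`, so multiplying by `sin (t/2)`
sums the cosines to `sin (m t) / 2`; as `m t = π/2 - t/2`, the sum is exactly `cot (t/2) / 2`.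
Since `sin x < x` and `cos x ≥ 1/2` on `(0, π/3]`, one has `cot x > 1 / (2x)` there, and `m ≥ 1`
puts `x = t/2 ≤ π/6` in this range.
-/

section

open Real

theorem sin_half_mul_sum_cos_reflect (n : ℕ) (t : ℝ) :
    sin (t / 2) * ∑ k ∈ Icc 1 n, cos (((n : ℝ) - k + 1 / 2) * t) = sin (n * t) / 2 := by
  have reindex : ∑ k ∈ Icc 1 n, cos (((n : ℝ) - k + 1 / 2) * t) =
      ∑ i ∈ range n, cos (-t * i + (n - 1 / 2) * t) := by
    rw [← Ico_add_one_right_eq_Icc, sum_Ico_eq_sum_range, Nat.add_sub_cancel]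
    refine sum_congr rfl fun i _ ↦ congrArg cos ?_
    push_cast
    ring
  have progression := sin_mul_sum_cos n (-t) ((n - 1 / 2) * t)
  have double_angle : sin (n * t) = 2 * sin (n * t / 2) * cos (n * t / 2) := by
    rw [← sin_two_mul, mul_div_cancel₀ _ two_ne_zero]
  rw [reindex, double_angle]
  have center : ((n : ℝ) - 1) * -t / 2 + (n - 1 / 2) * t = n * t / 2 := by ring
  rw [center, neg_div, sin_neg, mul_neg, neg_div, sin_neg] at progression
  linarith

theorem sum_cos_reflect_eq_cot_div_two (m : ℕ) :
    ∑ k ∈ Icc 1 m, cos (((m : ℝ) - k + 1 / 2) * π / (2 * m + 1)) =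
      cot (π / (2 * m + 1) / 2) / 2 := by
  set t : ℝ := π / (2 * m + 1) with ht
  have t_pos : 0 < t := by positivity
  have t_le_pi : t ≤ π := div_le_self pi_pos.le (by simp)
  have sin_half_ne_zero : sin (t / 2) ≠ 0 :=
    (sin_pos_of_pos_of_lt_pi (by linarith) (by linarith)).ne'
  have complement : m * t = π / 2 - t / 2 := by rw [ht]; field_simp; ring
  have closed_form := sin_half_mul_sum_cos_reflect m t
  rw [complement, sin_pi_div_two_sub] at closed_form
  simp only [mul_div_assoc, ← ht]
  rw [cot_eq_cos_div_sin, eq_div_of_mul_eq sin_half_ne_zero ((mul_comm _ _).trans closed_form),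
    div_right_comm]

theorem one_div_two_mul_lt_cot {x : ℝ} (hx₀ : 0 < x) (hx : x ≤ π / 3) : 1 / (2 * x) < cot x := by
  have half_le_cos : 1 / 2 ≤ cos x := by
    rw [← cos_pi_div_three]
    exact cos_le_cos_of_nonneg_of_le_pi hx₀.le (by linarith [pi_pos]) hx
  have sin_x_pos : 0 < sin x := sin_pos_of_pos_of_lt_pi hx₀ (by linarith [pi_pos])
  rw [cot_eq_cos_div_sin, div_lt_div_iff₀ (by positivity) sin_x_pos]
  calc 1 * sin x < x := by simpa only [one_mul] using sin_lt hx₀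
    _ = 1 / 2 * (2 * x) := by ring
    _ ≤ cos x * (2 * x) := by gcongr

end

/-- the entries of the top right singular vector of `D⁻¹` sum to more than
`√(2m+1)/π`. -/
theorem stmt10 (m : ℕ) (hm : 0 < m) :
    Real.sqrt (2 * (m : ℝ) + 1) / Real.pi <
      ∑ k ∈ Finset.Icc 1 m,
        Real.sqrt (2 / ((m : ℝ) + 1 / 2)) *
          Real.cos (((m : ℝ) - (k : ℝ) + 1 / 2) * Real.pi / (2 * (m : ℝ) + 1)) := by
  set N : ℝ := 2 * m + 1 with hN
  have three_le_N : 3 ≤ N := by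
    have : (1 : ℝ) ≤ m := by exact_mod_cast hm
    linarith
  have angle_le : Real.pi / N / 2 ≤ Real.pi / 3 := by
    rw [div_div]
    exact div_le_div_of_nonneg_left Real.pi_pos.le (by norm_num) (by linarith)
  have normalization : Real.sqrt (2 / (m + 1 / 2)) = 2 / Real.sqrt N := by
    have : (2 : ℝ) / (m + 1 / 2) = 2 ^ 2 / N := by rw [hN]; field_simp
    rw [this, Real.sqrt_div (by norm_num), Real.sqrt_sq (by norm_num)]
  calc Real.sqrt N / Real.pi
      = 2 / Real.sqrt N * (1 / (2 * (Real.pi / N / 2)) / 2) := by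
        field_simp
        exact Real.sq_sqrt (by positivity)
    _ < 2 / Real.sqrt N * (Real.cot (Real.pi / N / 2) / 2) := by
        gcongr
        exact one_div_two_mul_lt_cot (by positivity) angle_le
    _ = _ := by rw [← mul_sum, normalization, sum_cos_reflect_eq_cot_div_two]
end

section
/- Let V ∈ ℝ^{m×l} have orthonormal columns, and suppose the first column w of V has entries w_k = √(2/(m+1/2)) · cos( (m−k+1/2)π/(2m+1) ), k = 1,…,m. Let e = (1,…,1)ᵀ ∈ ℝ^m and G = VVᵀ. If m ≥ π²·l, then ∑_{k=1}^m |(Ge)_k| ≥ 2l. -/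
open Matrix Finset

/-!
Since `VᵀV = 1`, we have `VᵀG = Vᵀ`, so `⟨w, Ge⟩ = ⟨w, e⟩`. When `0 ≤ w ≤ s` entrywise, the
left side is at most `s ∑ |(Ge)_k|`, and the right side is at least `⟨w, w⟩ / s = 1 / s`; therefore
`∑ |(Ge)_k| ≥ 1 / s²`. For the cosine column `s² = 2 / (m + 1/2)`, which gives
`∑ |(Ge)_k| ≥ (m + 1/2) / 2`, and this exceeds `2l` because `m ≥ π² l ≥ 4l`.
-/

section OrthonormalColumns

variable {n ι R : Type*} [Fintype n] [DecidableEq ι] [CommSemiring R] {V : Matrix n ι R}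

theorem col_dotProduct_mul_transpose_mulVec [Fintype ι] (hV : Vᵀ * V = 1) (j : ι) (x : n → R) :
    V.col j ⬝ᵥ (V * Vᵀ) *ᵥ x = V.col j ⬝ᵥ x := by
  have h : Vᵀ *ᵥ ((V * Vᵀ) *ᵥ x) = Vᵀ *ᵥ x := by
    rw [mulVec_mulVec, ← Matrix.mul_assoc, hV, Matrix.one_mul]
  exact congrFun h j

theorem col_dotProduct_self_eq_one (hV : Vᵀ * V = 1) (j : ι) : V.col j ⬝ᵥ V.col j = 1 := by
  have h : (Vᵀ * V) j j = 1 := by rw [hV, one_apply_eq]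
  exact h

end OrthonormalColumns

section Ordered

variable {n R : Type*} [Fintype n] [CommRing R] [LinearOrder R] [IsOrderedRing R]

theorem dotProduct_le_mul_sum_abs {w : n → R} {s : R} (hw : ∀ i, |w i| ≤ s) (u : n → R) :
    w ⬝ᵥ u ≤ s * ∑ i, |u i| := by
  rw [dotProduct, mul_sum]
  refine sum_le_sum fun i _ => ?_
  calc w i * u i ≤ |w i| * |u i| := (le_abs_self _).trans_eq (abs_mul _ _)
    _ ≤ s * |u i| := by gcongr; exact hw i

theorem dotProduct_self_le_mul_dotProduct_one {w : n → R} {s : R}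
    (hw₀ : ∀ i, 0 ≤ w i) (hws : ∀ i, w i ≤ s) : w ⬝ᵥ w ≤ s * (w ⬝ᵥ 1) := by
  calc w ⬝ᵥ w ≤ w ⬝ᵥ s • 1 :=
        dotProduct_le_dotProduct_of_nonneg_left (fun i => by simpa using hws i) hw₀
    _ = s * (w ⬝ᵥ 1) := dotProduct_smul s w 1

theorem one_le_sq_mul_sum_abs_mul_transpose_mulVec_one {ι : Type*} [Fintype ι] [DecidableEq ι]
    {V : Matrix n ι R} (hV : Vᵀ * V = 1) (j : ι) {s : R} (hs : 0 ≤ s)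
    (hj₀ : ∀ i, 0 ≤ V i j) (hjs : ∀ i, V i j ≤ s) :
    1 ≤ s ^ 2 * ∑ i, |((V * Vᵀ) *ᵥ 1) i| := by
  have hj_abs (i : n) : |V.col j i| ≤ s := (abs_of_nonneg (hj₀ i)).trans_le (hjs i)
  calc 1 = V.col j ⬝ᵥ V.col j := (col_dotProduct_self_eq_one hV j).symm
    _ ≤ s * (V.col j ⬝ᵥ 1) := dotProduct_self_le_mul_dotProduct_one hj₀ hjs
    _ = s * (V.col j ⬝ᵥ (V * Vᵀ) *ᵥ 1) := by rw [col_dotProduct_mul_transpose_mulVec hV]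
    _ ≤ s * (s * ∑ i, |((V * Vᵀ) *ᵥ 1) i|) := by
      gcongr
      exact dotProduct_le_mul_sum_abs hj_abs _
    _ = s ^ 2 * ∑ i, |((V * Vᵀ) *ᵥ 1) i| := by ring

end Ordered

theorem cos_mul_pi_div_nonneg {x y : ℝ} (hxy : 2 * |x| ≤ y) : 0 ≤ Real.cos (x * Real.pi / y) := by
  have hy : 0 ≤ y := by linarith [abs_nonneg x]
  have h : |x * Real.pi / y| ≤ Real.pi / 2 := by
    rw [abs_div, abs_mul, abs_of_pos Real.pi_pos, abs_of_nonneg hy]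
    exact div_le_of_le_mul₀ hy (by positivity) (by nlinarith [Real.pi_pos])
  exact Real.cos_nonneg_of_mem_Icc (abs_le.mp h)

theorem stmt12_general {ι : Type*} [Fintype ι] [DecidableEq ι] (m : ℕ) (V : Matrix (Fin m) ι ℝ)
    (horth : Vᵀ * V = 1) (j : ι)
    (hw : ∀ i : Fin m, V i j =
      Real.sqrt (2 / ((m : ℝ) + 1 / 2)) *
        Real.cos (((m : ℝ) - ((i : ℕ) + 1 : ℝ) + 1 / 2) * Real.pi / (2 * (m : ℝ) + 1))) :
    ((m : ℝ) + 1 / 2) / 2 ≤ ∑ k, |(V * Vᵀ).mulVec (fun _ => 1) k| := by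
  have hw_nonneg (i : Fin m) : 0 ≤ V i j := by
    have hi : ((i : ℕ) : ℝ) + 1 ≤ m := mod_cast i.isLt
    rw [hw]
    refine mul_nonneg (Real.sqrt_nonneg _) (cos_mul_pi_div_nonneg ?_)
    rw [abs_of_nonneg] <;> linarith [Nat.cast_nonneg (α := ℝ) (i : ℕ)]
  have hw_le (i : Fin m) : V i j ≤ √(2 / ((m : ℝ) + 1 / 2)) := by
    rw [hw]
    exact mul_le_of_le_one_right (Real.sqrt_nonneg _) (Real.cos_le_one _)
  have h := one_le_sq_mul_sum_abs_mul_transpose_mulVec_one horth j (Real.sqrt_nonneg _)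
    hw_nonneg hw_le
  rwa [Real.sq_sqrt (by positivity), ← div_le_iff₀' (by positivity), one_div_div] at h

/-- if `V` has orthonormal columns whose first column is the top right
singular vector of `D⁻¹`, `G = VVᵀ`, and `m ≥ π² l`, then `∑_k |(Ge)_k| ≥ 2l`. -/
theorem stmt12 (m l : ℕ) (hl : 0 < l) (V : Matrix (Fin m) (Fin l) ℝ)
    (horth : Vᵀ * V = 1)
    (hw : ∀ i : Fin m, V i ⟨0, hl⟩ =
      Real.sqrt (2 / ((m : ℝ) + 1 / 2)) *
        Real.cos (((m : ℝ) - ((i : ℕ) + 1 : ℝ) + 1 / 2) * Real.pi / (2 * (m : ℝ) + 1)))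
    (hml : Real.pi ^ 2 * l ≤ m) :
    2 * (l : ℝ) ≤ ∑ k, |(V * Vᵀ).mulVec (fun _ => 1) k| := by
  have hpi : (4 : ℝ) ≤ Real.pi ^ 2 := by nlinarith [Real.pi_gt_three]
  linarith [stmt12_general m V horth _ hw, mul_le_mul_of_nonneg_right hpi l.cast_nonneg]
end

section
/- Let Φ ∈ ℂ^{N×k} satisfy Φ*Φ = N·I_k and e^TΦ = 0 (e the all-ones vector of ℝ^N), with every row of Φ of ℓ₂-norm at most r₁√k (r₁ ≥ 1). Let V ∈ ℂ^{m×l} have orthonormal columns with every row of ℓ₂-norm at most r₂√(l/m) (r₂ ≥ 1), with m even and m ≥ l ≥ k. Let A = VV* − diag(VV*) be the off-diagonal part of VV*, and let F ∈ ℂ^{m×k} be the random matrix whose m rows are drawn independently and uniformly at random (with replacement) from the rows of Φ. Then there is an absolute constant c such that for every integer p ≥ 2, E ‖F*AF‖_{4p}^{4p} ≤ c^{2p} · k · m · p^{6p} · k^{2p} · l^{2p} · r₁^{8p} · r₂^{4p}, where ‖·‖_{4p} denotes the Schatten 4p-norm. -/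
open Matrix Finset

/-!
Resampling one uniformly chosen row of `F` turns a function `X` of the sample into an exchangeable
pair `(X, X')`. If the expected increment `X - X'` returns a multiple of `X`, then exchangeability
and a mean-value trace inequality bound `E tr X ^ (2 * r + 2)` by the conditional variance weighted
by `X ^ (2 * r)` (Stein, Chatterjee; in the matrix setting Mackey, Jordan, Chen, Farrell and
Tropp), and Young's inequality closes the estimate.

The principle is used three times: for the rows of `AF`, for the Gram matrix `FᴴF` and for
`X = FᴴAF`. Replacing a row of `F` changes `FᴴAF` by a matrix of rank at most two, because `A` has
zero diagonal, and the resulting conditional variance involves `‖AF X ^ r‖²`. As `A` is the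
off-diagonal part of a projection whose diagonal is at most `β`, one has `A² ≤ 2A + 4β`, which
turns this term into `tr X ^ (2 * r + 1)` and `tr (FᴴF X ^ (2 * r))`.
-/

section

open scoped BigOperators ComplexOrder Matrix.Norms.Frobenius

section Scalar

lemma mul_pow_add_mul_pow_le {a b : ℝ} (ha : 0 ≤ a) (hb : 0 ≤ b) (i j : ℕ) :
    a ^ i * b ^ j + a ^ j * b ^ i ≤ a ^ (i + j) + b ^ (i + j) := by
  have hmono : 0 ≤ (a ^ i - b ^ i) * (a ^ j - b ^ j) := by
    rcases le_total a b with hab | hab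
    · exact mul_nonneg_of_nonpos_of_nonpos (sub_nonpos.2 (pow_le_pow_left₀ ha hab i))
        (sub_nonpos.2 (pow_le_pow_left₀ ha hab j))
    · exact mul_nonneg (sub_nonneg.2 (pow_le_pow_left₀ hb hab i))
        (sub_nonneg.2 (pow_le_pow_left₀ hb hab j))
  rw [pow_add, pow_add]
  linarith

lemma two_mul_geom_sum₂_le {a b : ℝ} (ha : 0 ≤ a) (hb : 0 ≤ b) (n : ℕ) :
    2 * ∑ i ∈ range (n + 1), a ^ i * b ^ (n - i) ≤ (n + 1) * (a ^ n + b ^ n) := by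
  have hreflect : ∑ i ∈ range (n + 1), a ^ (n - i) * b ^ i =
      ∑ i ∈ range (n + 1), a ^ i * b ^ (n - i) := by
    rw [← sum_range_reflect]
    refine sum_congr rfl fun i hi => ?_
    have := mem_range.1 hi
    congr 2; omega
  calc 2 * ∑ i ∈ range (n + 1), a ^ i * b ^ (n - i)
      = ∑ i ∈ range (n + 1), (a ^ i * b ^ (n - i) + a ^ (n - i) * b ^ i) := by
        rw [sum_add_distrib, hreflect, two_mul]
    _ ≤ ∑ _i ∈ range (n + 1), (a ^ n + b ^ n) := by
        refine sum_le_sum fun i hi => ?_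
        have h := mul_pow_add_mul_pow_le ha hb i (n - i)
        rwa [Nat.add_sub_of_le (Nat.lt_succ_iff.1 (mem_range.1 hi))] at h
    _ = (n + 1) * (a ^ n + b ^ n) := by
        rw [sum_const, card_range, nsmul_eq_mul, Nat.cast_succ]

lemma sub_mul_pow_sub_pow_le (a b : ℝ) (r : ℕ) :
    (a - b) * (a ^ (2 * r + 1) - b ^ (2 * r + 1)) ≤
      (2 * r + 1) / 2 * ((a - b) ^ 2 * (a ^ (2 * r) + b ^ (2 * r))) := by
  have hsum : 2 * ∑ i ∈ range (2 * r + 1), a ^ i * b ^ (2 * r - i) ≤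
      (2 * r + 1) * (a ^ (2 * r) + b ^ (2 * r)) :=
    calc 2 * ∑ i ∈ range (2 * r + 1), a ^ i * b ^ (2 * r - i)
        ≤ 2 * ∑ i ∈ range (2 * r + 1), |a| ^ i * |b| ^ (2 * r - i) := by
          refine mul_le_mul_of_nonneg_left (sum_le_sum fun i _ => ?_) two_pos.le
          rw [← abs_pow, ← abs_pow, ← abs_mul]
          exact le_abs_self _
      _ ≤ (2 * r + 1) * (|a| ^ (2 * r) + |b| ^ (2 * r)) := by
          exact_mod_cast two_mul_geom_sum₂_le (abs_nonneg a) (abs_nonneg b) (2 * r)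
      _ = (2 * r + 1) * (a ^ (2 * r) + b ^ (2 * r)) := by
          rw [(even_two_mul r).pow_abs, (even_two_mul r).pow_abs]
  calc (a - b) * (a ^ (2 * r + 1) - b ^ (2 * r + 1))
      = (a - b) ^ 2 / 2 * (2 * ∑ i ∈ range (2 * r + 1), a ^ i * b ^ (2 * r - i)) := by
        rw [← (Commute.all a b).geom_sum₂_mul, Nat.add_sub_cancel]
        ring
    _ ≤ (a - b) ^ 2 / 2 * ((2 * r + 1) * (a ^ (2 * r) + b ^ (2 * r))) := by gcongr
    _ = _ := by ring

lemma mul_pow_le_pow_succ_add_pow_succ {a b : ℝ} (ha : 0 ≤ a) (hb : 0 ≤ b) (n : ℕ) :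
    a * b ^ n ≤ a ^ (n + 1) + b ^ (n + 1) := by
  have h := mul_pow_add_mul_pow_le ha hb 1 n
  rw [pow_one, pow_one, add_comm 1 n] at h
  exact (le_add_of_nonneg_right (by positivity)).trans h

end Scalar

section Resampling

variable {ι α : Type*} [Fintype ι] [DecidableEq ι]

lemma sum_apply_sub_sum_apply_update {M : Type*} [AddCommGroup M] (f : ι → α → M) (σ : ι → α)
    (i : ι) (a : α) :
    ∑ j, f j (σ j) - ∑ j, f j (Function.update σ i a j) = f i (σ i) - f i a := by
  rw [← sum_sub_distrib, sum_eq_single i _ (by simp), Function.update_self]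
  intro j _ hj
  rw [Function.update_of_ne hj, sub_self]

variable [Fintype α]

/-- The sum over the coordinates `i` of the expectation of `t τ`, where `τ` is obtained from `σ` by
replacing the `i`-th coordinate by a uniformly random one. If `σ` is uniform as well, then each pair
`(σ, τ)` is exchangeable. -/
noncomputable def resampleSum (σ : ι → α) (t : (ι → α) → ℝ) : ℝ :=
  ∑ i, 𝔼 a, t (Function.update σ i a)

lemma resampleSum_mono (σ : ι → α) {t u : (ι → α) → ℝ} (h : ∀ τ, t τ ≤ u τ) :
    resampleSum σ t ≤ resampleSum σ u :=
  sum_le_sum fun _ _ => expect_le_expect fun _ _ => h _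

lemma resampleSum_add (σ : ι → α) (t u : (ι → α) → ℝ) :
    resampleSum σ (fun τ => t τ + u τ) = resampleSum σ t + resampleSum σ u := by
  simp only [resampleSum, expect_add_distrib, sum_add_distrib]

lemma resampleSum_mul_left (σ : ι → α) (c : ℝ) (t : (ι → α) → ℝ) :
    resampleSum σ (fun τ => c * t τ) = c * resampleSum σ t := by
  simp only [resampleSum, ← mul_expect, ← mul_sum]

lemma expect_resampleSum_comm (h : (ι → α) → (ι → α) → ℝ) :
    𝔼 σ, resampleSum σ (fun τ => h σ τ) = 𝔼 σ, resampleSum σ (fun τ => h τ σ) := by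
  simp only [resampleSum, expect_sum_comm]
  refine sum_congr rfl fun i _ => ?_
  have hinv : Function.Involutive
      fun x : (ι → α) × α => (Function.update x.1 i x.2, x.1 i) := fun x => by simp
  rw [← expect_product', ← expect_product']
  exact Fintype.expect_equiv hinv.toPerm _ _ fun x => by simp [Function.Involutive.coe_toPerm]

lemma expect_resampleSum_le_of_symm {C : ℝ} {t u : (ι → α) → (ι → α) → ℝ}
    (h : ∀ σ τ, t σ τ + t τ σ ≤ C * (u σ τ + u τ σ)) :
    𝔼 σ, resampleSum σ (fun τ => t σ τ) ≤ C * 𝔼 σ, resampleSum σ (fun τ => u σ τ) := by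
  have htwo : 𝔼 σ, resampleSum σ (fun τ => t σ τ + t τ σ) ≤
      C * 𝔼 σ, resampleSum σ (fun τ => u σ τ + u τ σ) := by
    rw [mul_expect]
    simp only [← resampleSum_mul_left]
    exact expect_le_expect fun σ _ => resampleSum_mono σ fun τ => h σ τ
  simp only [resampleSum_add, expect_add_distrib] at htwo
  rw [expect_resampleSum_comm fun σ τ => t τ σ, expect_resampleSum_comm fun σ τ => u τ σ] at htwo
  linarith

lemma resampleSum_le (σ : ι → α) {t : (ι → α) → ℝ} {s : ι → ℝ}
    (h : ∀ i a, t (Function.update σ i a) ≤ s i) : resampleSum σ t ≤ ∑ i, s i :=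
  sum_le_sum fun i _ => expect_le ⟨σ i, mem_univ _⟩ fun a _ => h i a

lemma resampleSum_sub_sum_apply (f : ι → α → ℝ) (σ : ι → α) :
    resampleSum σ (fun τ => ∑ j, f j (σ j) - ∑ j, f j (τ j)) =
      ∑ i, f i (σ i) - ∑ i, 𝔼 a, f i a := by
  rw [← sum_sub_distrib]
  refine sum_congr rfl fun i _ => ?_
  have : Nonempty α := ⟨σ i⟩
  simp only [sum_apply_sub_sum_apply_update, expect_sub_distrib, Fintype.expect_const]

end Resampling

section Norm

variable {E : Type*} [SeminormedAddCommGroup E]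

lemma norm_add_sq_le (x y : E) : ‖x + y‖ ^ 2 ≤ 2 * (‖x‖ ^ 2 + ‖y‖ ^ 2) :=
  (pow_le_pow_left₀ (norm_nonneg _) (norm_add_le x y) 2).trans add_sq_le

lemma norm_sub_sq_le (x y : E) : ‖x - y‖ ^ 2 ≤ 2 * (‖x‖ ^ 2 + ‖y‖ ^ 2) := by
  simpa only [sub_eq_add_neg, norm_neg] using norm_add_sq_le x (-y)

lemma resampleSum_norm_sub_sum_apply_sq_le {ι α : Type*} [Fintype ι] [DecidableEq ι] [Fintype α]
    {ψ : ι → α → E} {s : ι → ℝ}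
    (hs : ∀ i a, ‖ψ i a‖ ^ 2 ≤ s i) (σ : ι → α) :
    resampleSum σ (fun τ => ‖∑ i, ψ i (σ i) - ∑ i, ψ i (τ i)‖ ^ 2) ≤ 4 * ∑ i, s i := by
  rw [mul_sum]
  refine resampleSum_le σ fun i a => ?_
  rw [sum_apply_sub_sum_apply_update]
  linarith [norm_sub_sq_le (ψ i (σ i)) (ψ i a), hs i (σ i), hs i a]

end Norm

section VectorMoments

variable {ι α E : Type*} [Fintype ι] [DecidableEq ι] [Fintype α]
  [NormedAddCommGroup E] [InnerProductSpace ℝ E]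

-- The difference of the two sides is affine in `⟪x, y⟫`, so the worst case is `⟪x, y⟫ = ‖x‖ * ‖y‖`.
lemma inner_sub_mul_norm_pow_add_le (x y : E) (r : ℕ) :
    inner ℝ (x - y) x * ‖x‖ ^ (2 * r) + inner ℝ (y - x) y * ‖y‖ ^ (2 * r) ≤
      (2 * r + 1) / 2 *
        (‖x - y‖ ^ 2 * ‖x‖ ^ (2 * r) + ‖y - x‖ ^ 2 * ‖y‖ ^ (2 * r)) := by
  have hscalar := sub_mul_pow_sub_pow_le ‖x‖ ‖y‖ r
  have hinner : 0 ≤ 2 * r * ((‖x‖ ^ (2 * r) + ‖y‖ ^ (2 * r)) * (‖x‖ * ‖y‖ - inner ℝ x y)) := by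
    have := sub_nonneg.2 (real_inner_le_norm x y)
    positivity
  rw [norm_sub_rev y x, norm_sub_sq_real, inner_sub_left, inner_sub_left, real_inner_comm x y,
    real_inner_self_eq_norm_sq, real_inner_self_eq_norm_sq]
  linear_combination hscalar + hinner

lemma resampleSum_inner_sub_sum_apply {ψ : ι → α → E} (hψ : ∀ i, ∑ a, ψ i a = 0) (σ : ι → α)
    (v : E) :
    resampleSum σ (fun τ => inner ℝ (∑ i, ψ i (σ i) - ∑ i, ψ i (τ i)) v) =
      inner ℝ (∑ i, ψ i (σ i)) v := by
  have hmean (i : ι) : 𝔼 a, inner ℝ (ψ i a) v = 0 := by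
    rw [Fintype.expect_eq_sum_div_card, ← sum_inner, hψ, inner_zero_left, zero_div]
  simp only [inner_sub_left, sum_inner, resampleSum_sub_sum_apply (fun i a => inner ℝ (ψ i a) v),
    hmean, sum_const_zero, sub_zero]

theorem expect_norm_sum_pow_le [Nonempty α] {ψ : ι → α → E} {s : ι → ℝ}
    (hψ : ∀ i, ∑ a, ψ i a = 0) (hs : ∀ i a, ‖ψ i a‖ ^ 2 ≤ s i) (q : ℕ) :
    𝔼 σ : ι → α, ‖∑ i, ψ i (σ i)‖ ^ (2 * q) ≤ (4 * q * ∑ i, s i) ^ q := by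
  have hS : 0 ≤ ∑ i, s i :=
    sum_nonneg fun i _ => (sq_nonneg _).trans (hs i (Classical.arbitrary α))
  induction q with
  | zero => simp
  | succ q ih =>
    set X : (ι → α) → E := fun σ => ∑ i, ψ i (σ i)
    have hdrift (σ : ι → α) :
        resampleSum σ (fun τ => inner ℝ (X σ - X τ) (X σ) * ‖X σ‖ ^ (2 * q)) =
          ‖X σ‖ ^ (2 * (q + 1)) := by
      simp only [mul_comm _ (‖X σ‖ ^ (2 * q)), resampleSum_mul_left]
      rw [resampleSum_inner_sub_sum_apply hψ, real_inner_self_eq_norm_sq]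
      ring
    have hvar (σ : ι → α) : resampleSum σ (fun τ => ‖X σ - X τ‖ ^ 2 * ‖X σ‖ ^ (2 * q)) ≤
        4 * (∑ i, s i) * ‖X σ‖ ^ (2 * q) := by
      simp only [mul_comm _ (‖X σ‖ ^ (2 * q)), resampleSum_mul_left]
      gcongr
      exact resampleSum_norm_sub_sum_apply_sq_le hs σ
    calc 𝔼 σ, ‖X σ‖ ^ (2 * (q + 1))
        = 𝔼 σ, resampleSum σ (fun τ => inner ℝ (X σ - X τ) (X σ) * ‖X σ‖ ^ (2 * q)) := by
          simp only [hdrift]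
      _ ≤ (2 * q + 1) / 2 *
            𝔼 σ, resampleSum σ (fun τ => ‖X σ - X τ‖ ^ 2 * ‖X σ‖ ^ (2 * q)) :=
          expect_resampleSum_le_of_symm fun σ τ => inner_sub_mul_norm_pow_add_le (X σ) (X τ) q
      _ ≤ (2 * q + 1) / 2 * 𝔼 σ, 4 * (∑ i, s i) * ‖X σ‖ ^ (2 * q) := by
          gcongr
          exact hvar _
      _ = 2 * (2 * q + 1) * (∑ i, s i) * 𝔼 σ, ‖X σ‖ ^ (2 * q) := by
          rw [← mul_expect]
          ring
      _ ≤ 4 * ↑(q + 1) * (∑ i, s i) * (4 * ↑(q + 1) * ∑ i, s i) ^ q := by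
          refine mul_le_mul ?_ (ih.trans ?_) (expect_nonneg fun _ _ => by positivity)
            (by positivity)
          · push_cast
            linarith
          · gcongr
            simp
      _ = (4 * ↑(q + 1) * ∑ i, s i) ^ (q + 1) := (pow_succ' _ _).symm

end VectorMoments

section Frobenius

variable {m n : Type*} [Fintype m] [Fintype n]

lemma l2norm_eq_norm_toLp (v : n → ℂ) : l2norm v = ‖WithLp.toLp 2 v‖ := by
  simp only [l2norm, EuclideanSpace.norm_eq, Complex.normSq_eq_norm_sq]

lemma l2norm_sq (v : n → ℂ) : l2norm v ^ 2 = ∑ i, ‖v i‖ ^ 2 := by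
  rw [l2norm_eq_norm_toLp, EuclideanSpace.norm_sq_eq]

lemma l2norm_star (v : n → ℂ) : l2norm (star v) = l2norm v := by
  simp [l2norm]

lemma l2norm_sub_sq_le (v w : n → ℂ) : l2norm (v - w) ^ 2 ≤ 2 * (l2norm v ^ 2 + l2norm w ^ 2) := by
  simp only [l2norm_eq_norm_toLp, WithLp.toLp_sub]
  exact norm_sub_sq_le _ _

lemma frobenius_norm_sq (M : Matrix m n ℂ) : ‖M‖ ^ 2 = ∑ i, l2norm (M i) ^ 2 := by
  simp only [frobenius_norm_def, l2norm_sq, Real.rpow_two]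
  rw [← Real.sqrt_eq_rpow, Real.sq_sqrt (by positivity)]

lemma re_trace_conjTranspose_mul_self (M : Matrix m n ℂ) : (trace (Mᴴ * M)).re = ‖M‖ ^ 2 := by
  simp only [frobenius_norm_sq, l2norm_sq, trace, diag_apply, mul_apply, conjTranspose_apply,
    Complex.re_sum]
  rw [sum_comm]
  simp [← Complex.normSq_eq_norm_sq, Complex.normSq_apply]

lemma norm_vecMulVec_mul_sq {l : Type*} [Fintype l] (u : m → ℂ) (v : n → ℂ) (H : Matrix n l ℂ) :
    ‖vecMulVec u v * H‖ ^ 2 = l2norm u ^ 2 * l2norm (v ᵥ* H) ^ 2 := by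
  rw [vecMulVec_mul, frobenius_norm_sq, l2norm_sq u, sum_mul]
  refine sum_congr rfl fun i _ => ?_
  simp only [l2norm_sq, vecMulVec_apply, norm_mul, mul_pow, mul_sum]

end Frobenius

section Spectral

variable {n : Type*} [Fintype n] [DecidableEq n] {W Y : Matrix n n ℂ}

/-- The squared modulus `|⟨uᵢ, vⱼ⟩|²` of the inner product of the `i`-th eigenvector of `W` and the
`j`-th eigenvector of `Y`, in terms of which traces of products of powers of `W` and `Y` are double
sums over the eigenvalues. -/
noncomputable def spectralOverlap (hW : W.IsHermitian) (hY : Y.IsHermitian) (i j : n) : ℝ :=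
  ‖((hW.eigenvectorUnitary : Matrix n n ℂ)ᴴ * (hY.eigenvectorUnitary : Matrix n n ℂ)) i j‖ ^ 2

lemma spectralOverlap_comm (hW : W.IsHermitian) (hY : Y.IsHermitian) (i j : n) :
    spectralOverlap hW hY i j = spectralOverlap hY hW j i := by
  rw [spectralOverlap, spectralOverlap, ← norm_star, ← conjTranspose_apply, conjTranspose_mul,
    conjTranspose_conjTranspose]

lemma spectralOverlap_nonneg (hW : W.IsHermitian) (hY : Y.IsHermitian) (i j : n) :
    0 ≤ spectralOverlap hW hY i j :=
  sq_nonneg _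

lemma pow_eq_eigenvectorUnitary_mul_diagonal_mul (hW : W.IsHermitian) (a : ℕ) :
    W ^ a = (hW.eigenvectorUnitary : Matrix n n ℂ) *
      diagonal (fun i => ((hW.eigenvalues i ^ a : ℝ) : ℂ)) *
        (hW.eigenvectorUnitary : Matrix n n ℂ)ᴴ := by
  conv_lhs => rw [hW.spectral_theorem, ← map_pow, diagonal_pow, Unitary.conjStarAlgAut_apply]
  simp [Function.comp_def, Pi.pow_def, star_eq_conjTranspose]

lemma re_trace_pow_mul_pow (hW : W.IsHermitian) (hY : Y.IsHermitian) (a b : ℕ) :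
    (trace (W ^ a * Y ^ b)).re =
      ∑ i, ∑ j, spectralOverlap hW hY i j * (hW.eigenvalues i ^ a * hY.eigenvalues j ^ b) := by
  set U := (hW.eigenvectorUnitary : Matrix n n ℂ)
  set T := (hY.eigenvectorUnitary : Matrix n n ℂ)
  set d := diagonal fun i => ((hW.eigenvalues i ^ a : ℝ) : ℂ)
  set e := diagonal fun i => ((hY.eigenvalues i ^ b : ℝ) : ℂ)
  have hcyc : trace (W ^ a * Y ^ b) = trace (d * (Uᴴ * T) * e * (Uᴴ * T)ᴴ) := by
    rw [pow_eq_eigenvectorUnitary_mul_diagonal_mul hW,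
      pow_eq_eigenvectorUnitary_mul_diagonal_mul hY, Matrix.mul_assoc, Matrix.mul_assoc,
      trace_mul_comm, conjTranspose_mul, conjTranspose_conjTranspose]
    simp only [Matrix.mul_assoc, U, T, d, e]
  rw [hcyc, trace, Complex.re_sum]
  refine sum_congr rfl fun i _ => ?_
  rw [diag_apply, mul_apply, Complex.re_sum]
  refine sum_congr rfl fun j _ => ?_
  rw [mul_diagonal, diagonal_mul, conjTranspose_apply, spectralOverlap, ← Complex.normSq_eq_norm_sq]
  simp only [Complex.normSq_apply, Complex.mul_re, Complex.mul_im, Complex.ofReal_re,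
    Complex.ofReal_im, Complex.star_def, Complex.conj_re, Complex.conj_im]
  ring

lemma re_trace_pow (hW : W.IsHermitian) (a : ℕ) :
    (trace (W ^ a)).re = ∑ i, hW.eigenvalues i ^ a := by
  rw [pow_eq_eigenvectorUnitary_mul_diagonal_mul hW, trace_mul_comm, ← Matrix.mul_assoc,
    ← star_eq_conjTranspose, Unitary.coe_star_mul_self, Matrix.one_mul, trace_diagonal,
    Complex.re_sum]
  rfl

lemma re_trace_sub_mul_pow (hW : W.IsHermitian) (hY : Y.IsHermitian) (a : ℕ) :
    (trace ((W - Y) * W ^ a)).re = ∑ i, ∑ j, spectralOverlap hW hY i j *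
      ((hW.eigenvalues i - hY.eigenvalues j) * hW.eigenvalues i ^ a) := by
  have h₀ := re_trace_pow_mul_pow hW hY (a + 1) 0
  have h₁ := re_trace_pow_mul_pow hW hY a 1
  rw [pow_zero, Matrix.mul_one] at h₀
  rw [pow_one] at h₁
  rw [Matrix.sub_mul, trace_sub, Complex.sub_re, ← pow_succ', trace_mul_comm Y, h₀, h₁]
  simp only [← sum_sub_distrib]
  exact sum_congr rfl fun i _ => sum_congr rfl fun j _ => by ring

lemma norm_sub_mul_pow_sq (hW : W.IsHermitian) (hY : Y.IsHermitian) (a : ℕ) :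
    ‖(W - Y) * W ^ a‖ ^ 2 = ∑ i, ∑ j, spectralOverlap hW hY i j *
      ((hW.eigenvalues i - hY.eigenvalues j) ^ 2 * hW.eigenvalues i ^ (2 * a)) := by
  have hexpand : trace (((W - Y) * W ^ a)ᴴ * ((W - Y) * W ^ a)) =
      trace (W ^ (2 * a + 2) * Y ^ 0) - 2 * trace (W ^ (2 * a + 1) * Y ^ 1)
        + trace (W ^ (2 * a) * Y ^ 2) := by
    calc trace (((W - Y) * W ^ a)ᴴ * ((W - Y) * W ^ a))
        = trace ((W - Y) * (W - Y) * W ^ (2 * a)) := by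
          rw [conjTranspose_mul, conjTranspose_pow, conjTranspose_sub, hW.eq, hY.eq,
            Matrix.mul_assoc, trace_mul_comm, two_mul, pow_add]
          simp only [Matrix.mul_assoc]
      _ = trace (W * (W * W ^ (2 * a))) - trace (W * (Y * W ^ (2 * a)))
            - trace (Y * (W * W ^ (2 * a))) + trace (Y * Y * W ^ (2 * a)) := by
          simp only [Matrix.sub_mul, Matrix.mul_sub, Matrix.mul_assoc, trace_sub]
          ring
      _ = _ := by
          rw [trace_mul_comm W (Y * _), trace_mul_comm (Y * Y), Matrix.mul_assoc Y, ← pow_succ,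
            ← pow_succ', ← pow_succ', ← sq, trace_mul_comm Y, pow_zero, pow_one, Matrix.mul_one]
          ring
  rw [← re_trace_conjTranspose_mul_self, hexpand, Complex.add_re, Complex.sub_re]
  simp only [re_trace_pow_mul_pow hW hY, Complex.mul_re, Complex.re_ofNat, Complex.im_ofNat,
    zero_mul, sub_zero, mul_sum, ← sum_sub_distrib, ← sum_add_distrib]
  exact sum_congr rfl fun i _ => sum_congr rfl fun j _ => by ring

lemma re_trace_sub_mul_pow_add_le (hW : W.IsHermitian) (hY : Y.IsHermitian) (r : ℕ) :
    (trace ((W - Y) * W ^ (2 * r + 1))).re + (trace ((Y - W) * Y ^ (2 * r + 1))).re ≤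
      (2 * r + 1) / 2 * (‖(W - Y) * W ^ r‖ ^ 2 + ‖(Y - W) * Y ^ r‖ ^ 2) := by
  have hdrift : (trace ((Y - W) * Y ^ (2 * r + 1))).re = ∑ i, ∑ j, spectralOverlap hW hY i j *
      ((hY.eigenvalues j - hW.eigenvalues i) * hY.eigenvalues j ^ (2 * r + 1)) := by
    rw [re_trace_sub_mul_pow hY hW, sum_comm]
    simp only [spectralOverlap_comm hY hW]
  have hvar : ‖(Y - W) * Y ^ r‖ ^ 2 = ∑ i, ∑ j, spectralOverlap hW hY i j *
      ((hY.eigenvalues j - hW.eigenvalues i) ^ 2 * hY.eigenvalues j ^ (2 * r)) := by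
    rw [norm_sub_mul_pow_sq hY hW, sum_comm]
    simp only [spectralOverlap_comm hY hW]
  rw [re_trace_sub_mul_pow hW hY, hdrift, norm_sub_mul_pow_sq hW hY, hvar]
  simp only [mul_sum, ← sum_add_distrib]
  refine sum_le_sum fun i _ => sum_le_sum fun j _ => ?_
  have h := mul_le_mul_of_nonneg_left
    (sub_mul_pow_sub_pow_le (hW.eigenvalues i) (hY.eigenvalues j) r)
    (spectralOverlap_nonneg hW hY i j)
  linear_combination h

lemma mul_re_trace_pow_le (hW : W.IsHermitian) {t : ℝ} (ht : 0 ≤ t) (r : ℕ) :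
    t * (trace (W ^ (2 * r + 1))).re ≤
      Fintype.card n * t ^ (2 * r + 2) + (trace (W ^ (2 * r + 2))).re := by
  rw [re_trace_pow hW, re_trace_pow hW, mul_sum, ← nsmul_eq_mul, ← card_univ, ← sum_const,
    ← sum_add_distrib]
  refine sum_le_sum fun i _ => ?_
  calc t * hW.eigenvalues i ^ (2 * r + 1)
      ≤ t * |hW.eigenvalues i| ^ (2 * r + 1) := by
        rw [← abs_pow]
        gcongr
        exact le_abs_self _
    _ ≤ t ^ (2 * r + 1 + 1) + |hW.eigenvalues i| ^ (2 * r + 1 + 1) :=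
        mul_pow_le_pow_succ_add_pow_succ ht (abs_nonneg _) _
    _ = t ^ (2 * r + 2) + hW.eigenvalues i ^ (2 * r + 2) := by
        rw [Even.pow_abs (by simp [parity_simps])]

lemma mul_re_trace_mul_pow_le (hW : W.PosSemidef) (hY : Y.IsHermitian) {t : ℝ} (ht : 0 ≤ t)
    (r : ℕ) :
    t * (trace (W * Y ^ (2 * r))).re ≤
      t ^ (r + 1) * (trace (W ^ (r + 1))).re + (trace (Y ^ (2 * r + 2))).re := by
  have hWY := re_trace_pow_mul_pow hW.1 hY 1 (2 * r)
  have hW' := re_trace_pow_mul_pow hW.1 hY (r + 1) 0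
  have hY' := re_trace_pow_mul_pow hW.1 hY 0 (2 * r + 2)
  rw [pow_one] at hWY
  rw [pow_zero, Matrix.mul_one] at hW'
  rw [pow_zero, Matrix.one_mul] at hY'
  rw [hWY, hW', hY']
  simp only [mul_sum, ← sum_add_distrib]
  refine sum_le_sum fun i _ => sum_le_sum fun j _ => ?_
  have h := mul_le_mul_of_nonneg_left
    (mul_pow_le_pow_succ_add_pow_succ (mul_nonneg ht (hW.eigenvalues_nonneg i))
      (sq_nonneg (hY.eigenvalues j)) r)
    (spectralOverlap_nonneg hW.1 hY i j)
  linear_combination h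

lemma re_trace_pow_sq_le (hW : W.IsHermitian) (q : ℕ) :
    (trace (W ^ q)).re ^ 2 ≤ Fintype.card n * (trace (W ^ (2 * q))).re := by
  rw [re_trace_pow hW, re_trace_pow hW, mul_comm 2 q]
  simp only [pow_mul]
  exact sq_sum_le_card_mul_sum_sq

end Spectral

lemma norm_mul_sq_eq_sum {l m n : Type*} [Fintype l] [Fintype m] [Fintype n] (M : Matrix l m ℂ)
    (H : Matrix m n ℂ) : ‖M * H‖ ^ 2 = ∑ i, l2norm (M i ᵥ* H) ^ 2 := by
  simp only [frobenius_norm_sq, mul_apply_eq_vecMul]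

lemma conjTranspose_mul_eq_sum_vecMulVec {l m n : Type*} [Fintype m] (M : Matrix m l ℂ)
    (N : Matrix m n ℂ) : Mᴴ * N = ∑ i, vecMulVec (star (M i)) (N i) := by
  ext a b
  simp [mul_apply, Matrix.sum_apply, vecMulVec_apply]

section Sampling

variable {ι ν κ : Type*} [Fintype ι] [DecidableEq ι] [Fintype ν] [Fintype κ]

theorem expect_resampleSum_re_trace_le [DecidableEq κ] {X : (ι → ν) → Matrix κ κ ℂ}
    (hX : ∀ σ, (X σ).IsHermitian) (r : ℕ) :
    𝔼 σ, resampleSum σ (fun τ => (trace ((X σ - X τ) * X σ ^ (2 * r + 1))).re) ≤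
      (2 * r + 1) / 2 * 𝔼 σ, resampleSum σ (fun τ => ‖(X σ - X τ) * X σ ^ r‖ ^ 2) :=
  expect_resampleSum_le_of_symm fun σ τ => re_trace_sub_mul_pow_add_le (hX σ) (hX τ) r

lemma expect_l2norm_vecMul_submatrix_pow_le [Nonempty ν] {Φ : Matrix ν κ ℂ} {B : ℝ}
    (hΦ : ∀ t, ∑ a, Φ a t = 0) (hB : ∀ a, l2norm (Φ a) ^ 2 ≤ B) (w : ι → ℂ) (q : ℕ) :
    𝔼 σ : ι → ν, l2norm (w ᵥ* Φ.submatrix σ id) ^ (2 * q) ≤ (4 * q * (l2norm w ^ 2 * B)) ^ q := by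
  have hsum (σ : ι → ν) : l2norm (w ᵥ* Φ.submatrix σ id) =
      ‖∑ i, WithLp.toLp 2 (w i • Φ (σ i))‖ := by
    rw [l2norm_eq_norm_toLp, vecMul_eq_sum, WithLp.toLp_sum]
    rfl
  have hcenter (i : ι) : ∑ a, WithLp.toLp 2 (w i • Φ a) = 0 := by
    ext t
    simp [← mul_sum, hΦ]
  have hbound (i : ι) (a : ν) : ‖WithLp.toLp 2 (w i • Φ a)‖ ^ 2 ≤ ‖w i‖ ^ 2 * B := by
    rw [WithLp.toLp_smul, norm_smul, mul_pow, ← l2norm_eq_norm_toLp]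
    gcongr
    exact hB a
  simp only [hsum, l2norm_sq w, sum_mul]
  exact expect_norm_sum_pow_le hcenter hbound q

end Sampling

section ShiftedGram

variable {ι ν κ : Type*} [Fintype ι] [DecidableEq κ]

/-- The Gram matrix `FᴴF` of the rows of `Φ` sampled by `σ`, plus its mean when `Φ` is a tight frame
normalised by `ΦᴴΦ = N`. The shift makes it control both the sampled rows and their independent
copies, see `sum_expect_l2norm_vecMul_sq`. -/
noncomputable def shiftedGram (Φ : Matrix ν κ ℂ) (σ : ι → ν) : Matrix κ κ ℂ :=
  (Φ.submatrix σ id)ᴴ * Φ.submatrix σ id + (Fintype.card ι : ℂ) • 1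

lemma shiftedGram_eq_sum (Φ : Matrix ν κ ℂ) (σ : ι → ν) :
    shiftedGram Φ σ =
      ∑ i, vecMulVec (star (Φ (σ i))) (Φ (σ i)) + (Fintype.card ι : ℂ) • 1 := by
  rw [shiftedGram, conjTranspose_mul_eq_sum_vecMulVec]
  rfl

lemma posSemidef_shiftedGram [Finite κ] (Φ : Matrix ν κ ℂ) (σ : ι → ν) :
    (shiftedGram Φ σ).PosSemidef :=
  (posSemidef_conjTranspose_mul_self _).add (PosSemidef.one.smul (Nat.cast_nonneg _))

variable [Fintype κ]

lemma re_trace_conjTranspose_mul_shiftedGram_mul (Φ : Matrix ν κ ℂ) (σ : ι → ν)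
    (H : Matrix κ κ ℂ) :
    (trace (Hᴴ * shiftedGram Φ σ * H)).re =
      ‖Φ.submatrix σ id * H‖ ^ 2 + Fintype.card ι * ‖H‖ ^ 2 := by
  rw [← re_trace_conjTranspose_mul_self, ← re_trace_conjTranspose_mul_self, shiftedGram]
  simp [Matrix.mul_add, Matrix.add_mul, Matrix.mul_assoc, conjTranspose_mul, trace_add]

variable [Fintype ν] [Nonempty ν] {Φ : Matrix ν κ ℂ}

lemma expect_re_trace_vecMulVec_mul
    (hΦ : Φᴴ * Φ = (Fintype.card ν : ℂ) • 1) (H : Matrix κ κ ℂ) :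
    𝔼 a, (trace (vecMulVec (star (Φ a)) (Φ a) * H)).re = (trace H).re := by
  rw [Fintype.expect_eq_sum_div_card, ← Complex.re_sum, ← trace_sum, ← Finset.sum_mul,
    ← conjTranspose_mul_eq_sum_vecMulVec, hΦ, Matrix.smul_mul, Matrix.one_mul, trace_smul]
  simp [Fintype.card_ne_zero]

lemma expect_l2norm_vecMul_sq
    (hΦ : Φᴴ * Φ = (Fintype.card ν : ℂ) • 1) (H : Matrix κ κ ℂ) :
    𝔼 a, l2norm (Φ a ᵥ* H) ^ 2 = ‖H‖ ^ 2 := by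
  rw [Fintype.expect_eq_sum_div_card, ← norm_mul_sq_eq_sum, ← re_trace_conjTranspose_mul_self,
    conjTranspose_mul, Matrix.mul_assoc, ← Matrix.mul_assoc Φᴴ, hΦ, Matrix.smul_mul, Matrix.one_mul,
    Matrix.mul_smul, trace_smul, ← re_trace_conjTranspose_mul_self]
  simp [Fintype.card_ne_zero]

lemma sum_expect_l2norm_vecMul_sq
    (hΦ : Φᴴ * Φ = (Fintype.card ν : ℂ) • 1) (σ : ι → ν) (H : Matrix κ κ ℂ) :
    ∑ i, 𝔼 a, (l2norm (Φ (σ i) ᵥ* H) ^ 2 + l2norm (Φ a ᵥ* H) ^ 2) =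
      (trace (Hᴴ * shiftedGram Φ σ * H)).re := by
  rw [re_trace_conjTranspose_mul_shiftedGram_mul, norm_mul_sq_eq_sum]
  simp only [expect_add_distrib, sum_add_distrib, Fintype.expect_const, expect_l2norm_vecMul_sq hΦ,
    sum_const, card_univ, nsmul_eq_mul]
  rfl

variable [DecidableEq ι]

lemma resampleSum_re_trace_shiftedGram_sub
    (hΦ : Φᴴ * Φ = (Fintype.card ν : ℂ) • 1) (σ : ι → ν) (H : Matrix κ κ ℂ) :
    resampleSum σ (fun τ => (trace ((shiftedGram Φ σ - shiftedGram Φ τ) * H)).re) =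
      (trace (shiftedGram Φ σ * H)).re - 2 * Fintype.card ι * (trace H).re := by
  have hdrift := resampleSum_sub_sum_apply
    (fun (_ : ι) a => (trace (vecMulVec (star (Φ a)) (Φ a) * H)).re) σ
  simp only [expect_re_trace_vecMulVec_mul hΦ, sum_const, card_univ, nsmul_eq_mul] at hdrift
  simp only [shiftedGram_eq_sum, add_sub_add_right_eq_sub, Matrix.sub_mul, Matrix.add_mul,
    Finset.sum_mul, trace_sub, trace_add, trace_sum, Complex.sub_re, Complex.add_re,
    Complex.re_sum, hdrift, Matrix.smul_mul, Matrix.one_mul, trace_smul, smul_eq_mul,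
    Complex.re_ofReal_mul, ← Complex.ofReal_natCast]
  ring

lemma resampleSum_norm_shiftedGram_sub_mul_sq_le {B : ℝ}
    (hΦ : Φᴴ * Φ = (Fintype.card ν : ℂ) • 1) (hB : ∀ a, l2norm (Φ a) ^ 2 ≤ B) (σ : ι → ν)
    (H : Matrix κ κ ℂ) :
    resampleSum σ (fun τ => ‖(shiftedGram Φ σ - shiftedGram Φ τ) * H‖ ^ 2) ≤
      2 * B * (trace (Hᴴ * shiftedGram Φ σ * H)).re := by
  rw [← sum_expect_l2norm_vecMul_sq hΦ, mul_sum]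
  refine sum_le_sum fun i _ => ?_
  rw [mul_expect]
  refine expect_le_expect fun a _ => ?_
  have hrank (b : ν) : ‖vecMulVec (star (Φ b)) (Φ b) * H‖ ^ 2 ≤ B * l2norm (Φ b ᵥ* H) ^ 2 := by
    rw [norm_vecMulVec_mul_sq, l2norm_star]
    gcongr
    exact hB b
  simp only [shiftedGram_eq_sum]
  rw [add_sub_add_right_eq_sub,
    sum_apply_sub_sum_apply_update (fun _ b => vecMulVec (star (Φ b)) (Φ b)), Matrix.sub_mul]
  linarith [norm_sub_sq_le (vecMulVec (star (Φ (σ i))) (Φ (σ i)) * H)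
    (vecMulVec (star (Φ a)) (Φ a) * H), hrank (σ i), hrank a]

theorem expect_re_trace_shiftedGram_pow_le {B : ℝ}
    (hΦ : Φᴴ * Φ = (Fintype.card ν : ℂ) • 1) (hB : ∀ a, l2norm (Φ a) ^ 2 ≤ B) (r : ℕ) :
    𝔼 σ : ι → ν, (trace (shiftedGram Φ σ ^ (2 * r + 2))).re ≤
      Fintype.card κ * (4 * Fintype.card ι + 2 * (2 * r + 1) * B) ^ (2 * r + 2) := by
  have hB₀ : 0 ≤ B := (sq_nonneg _).trans (hB (Classical.arbitrary ν))
  set Z : (ι → ν) → Matrix κ κ ℂ := shiftedGram Φ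
  have hZ (σ : ι → ν) : (Z σ).IsHermitian := (posSemidef_shiftedGram Φ σ).1
  set c : ℝ := 4 * Fintype.card ι + 2 * (2 * r + 1) * B with hc
  have hdrift (σ : ι → ν) : resampleSum σ (fun τ => (trace ((Z σ - Z τ) * Z σ ^ (2 * r + 1))).re) =
      (trace (Z σ ^ (2 * r + 2))).re - 2 * Fintype.card ι * (trace (Z σ ^ (2 * r + 1))).re := by
    rw [resampleSum_re_trace_shiftedGram_sub hΦ, ← pow_succ']
  have hvar (σ : ι → ν) : resampleSum σ (fun τ => ‖(Z σ - Z τ) * Z σ ^ r‖ ^ 2) ≤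
      2 * B * (trace (Z σ ^ (2 * r + 1))).re := by
    refine (resampleSum_norm_shiftedGram_sub_mul_sq_le hΦ hB σ (Z σ ^ r)).trans_eq ?_
    rw [conjTranspose_pow, (hZ σ).eq, ← pow_succ, ← pow_add]
    congr 4
    ring
  have hmoment := (expect_resampleSum_re_trace_le hZ r).trans
    (mul_le_mul_of_nonneg_left (expect_le_expect fun σ _ => hvar σ) (by positivity))
  have hyoung : c * 𝔼 σ, (trace (Z σ ^ (2 * r + 1))).re ≤
      Fintype.card κ * c ^ (2 * r + 2) + 𝔼 σ, (trace (Z σ ^ (2 * r + 2))).re := by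
    rw [mul_expect, ← Fintype.expect_const (ι := ι → ν) (Fintype.card κ * c ^ (2 * r + 2)),
      ← expect_add_distrib]
    exact expect_le_expect fun σ _ => mul_re_trace_pow_le (hZ σ) (by positivity) r
  simp only [hdrift, expect_sub_distrib, ← mul_expect] at hmoment
  rw [hc] at hyoung ⊢
  linarith

end ShiftedGram

section SampledForm

variable {ι ν κ : Type*}

lemma submatrix_sub_submatrix_update [DecidableEq ι] (Φ : Matrix ν κ ℂ) (σ : ι → ν) (i : ι)
    (a : ν) : Φ.submatrix σ id - Φ.submatrix (Function.update σ i a) id =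
      vecMulVec (Pi.single i 1) (Φ (σ i) - Φ a) := by
  ext j t
  rcases eq_or_ne j i with rfl | hj
  · simp [vecMulVec_apply]
  · simp [vecMulVec_apply, hj]

variable [Fintype ι]

/-- The quadratic form `FᴴAF` in the rows `F` of `Φ` sampled by `σ`. -/
def sampledForm (A : Matrix ι ι ℂ) (Φ : Matrix ν κ ℂ) (σ : ι → ν) : Matrix κ κ ℂ :=
  (Φ.submatrix σ id)ᴴ * A * Φ.submatrix σ id

lemma isHermitian_sampledForm {A : Matrix ι ι ℂ} (hA : A.IsHermitian) (Φ : Matrix ν κ ℂ)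
    (σ : ι → ν) : (sampledForm A Φ σ).IsHermitian :=
  isHermitian_conjTranspose_mul_mul _ hA

lemma sampledForm_eq_sum (A : Matrix ι ι ℂ) (Φ : Matrix ν κ ℂ) (σ : ι → ν) :
    sampledForm A Φ σ = ∑ i, vecMulVec (star (Φ (σ i))) ((A * Φ.submatrix σ id) i) := by
  rw [sampledForm, Matrix.mul_assoc, conjTranspose_mul_eq_sum_vecMulVec]
  rfl

variable [DecidableEq ι] {A : Matrix ι ι ℂ}

lemma sampledForm_sub_sampledForm_update (hA : A.IsHermitian) (hdiag : ∀ i, A i i = 0)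
    (Φ : Matrix ν κ ℂ) (σ : ι → ν) (i : ι) (a : ν) :
    sampledForm A Φ σ - sampledForm A Φ (Function.update σ i a) =
      vecMulVec (star (Φ (σ i) - Φ a)) ((A * Φ.submatrix σ id) i) +
        vecMulVec (star ((A * Φ.submatrix σ id) i)) (Φ (σ i) - Φ a) := by
  set F := Φ.submatrix σ id
  set E := vecMulVec (Pi.single i 1) (Φ (σ i) - Φ a) with hE
  have hupdate : Φ.submatrix (Function.update σ i a) id = F - E := by
    rw [hE, ← submatrix_sub_submatrix_update, sub_sub_cancel]
  have hEA (M : Matrix ι κ ℂ) :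
      Eᴴ * A * M = vecMulVec (star (Φ (σ i) - Φ a)) ((A * M) i) := by
    rw [hE, conjTranspose_vecMulVec, Matrix.mul_assoc, vecMulVec_mul, ← Pi.single_star, star_one,
      single_one_vecMul]
    rfl
  have hEAE : Eᴴ * A * E = 0 := by
    have hAE : (A * E) i = 0 := by
      rw [hE, mul_vecMulVec, mulVec_single_one]
      ext t
      simp [vecMulVec_apply, hdiag]
    rw [hEA, hAE, vecMulVec_zero]
  have hFAE : Fᴴ * A * E = (Eᴴ * A * F)ᴴ := by
    simp only [conjTranspose_mul, conjTranspose_conjTranspose, hA.eq, Matrix.mul_assoc]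
  have hexpand : Fᴴ * A * F - (F - E)ᴴ * A * (F - E) =
      Eᴴ * A * F + Fᴴ * A * E - Eᴴ * A * E := by
    simp only [conjTranspose_sub, Matrix.sub_mul, Matrix.mul_sub]
    abel
  rw [sampledForm, sampledForm, hupdate, hexpand, hEAE, sub_zero, hFAE, hEA,
    conjTranspose_vecMulVec, star_star]

variable [Fintype ν] [Fintype κ] {Φ : Matrix ν κ ℂ}

lemma resampleSum_re_trace_sampledForm_sub (hA : A.IsHermitian) (hdiag : ∀ i, A i i = 0)
    (hΦ : ∀ t, ∑ a, Φ a t = 0) (σ : ι → ν) (H : Matrix κ κ ℂ) :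
    resampleSum σ (fun τ => (trace ((sampledForm A Φ σ - sampledForm A Φ τ) * H)).re) =
      2 * (trace (sampledForm A Φ σ * H)).re := by
  set g : ι → κ → ℂ := A * Φ.submatrix σ id
  set D : ι → ν → Matrix κ κ ℂ := fun i a =>
    vecMulVec (star (Φ a)) (g i) + vecMulVec (star (g i)) (Φ a) with hD
  have hmean (i : ι) : 𝔼 a, (trace (D i a * H)).re = 0 := by
    have hcenter : ∑ a, D i a = 0 := by
      ext s t
      simp [hD, Matrix.sum_apply, vecMulVec_apply, sum_add_distrib, ← sum_mul, ← mul_sum,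
        ← map_sum, hΦ]
    rw [Fintype.expect_eq_sum_div_card, ← Complex.re_sum, ← trace_sum, ← Finset.sum_mul, hcenter]
    simp
  have htotal : ∑ i, D i (σ i) = 2 • sampledForm A Φ σ := by
    have hstar := congrArg conjTranspose (sampledForm_eq_sum A Φ σ)
    rw [(isHermitian_sampledForm hA Φ σ).eq, conjTranspose_sum] at hstar
    simp only [conjTranspose_vecMulVec, star_star] at hstar
    rw [hD, sum_add_distrib, two_smul, ← hstar, ← sampledForm_eq_sum]
  have hterm (i : ι) (a : ν) : (trace ((sampledForm A Φ σ -
      sampledForm A Φ (Function.update σ i a)) * H)).re =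
        (trace (D i (σ i) * H)).re - (trace (D i a * H)).re := by
    rw [sampledForm_sub_sampledForm_update hA hdiag, ← Complex.sub_re, ← trace_sub,
      ← Matrix.sub_mul, star_sub, sub_vecMulVec, vecMulVec_sub]
    congr 3
    simp only [hD]
    abel
  calc resampleSum σ (fun τ => (trace ((sampledForm A Φ σ - sampledForm A Φ τ) * H)).re)
      = ∑ i, (trace (D i (σ i) * H)).re := by
        refine sum_congr rfl fun i _ => ?_
        have : Nonempty ν := ⟨σ i⟩
        simp only [hterm, expect_sub_distrib, Fintype.expect_const, hmean, sub_zero]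
    _ = 2 * (trace (sampledForm A Φ σ * H)).re := by
        rw [← Complex.re_sum, ← trace_sum, ← Finset.sum_mul, htotal, smul_mul_assoc, trace_smul]
        simp

variable [DecidableEq κ] {B β : ℝ}

lemma resampleSum_norm_sampledForm_sub_mul_sq_le [Nonempty ν] {γ : ℝ} {σ : ι → ν}
    (hA : A.IsHermitian) (hdiag : ∀ i, A i i = 0)
    (hΦ : Φᴴ * Φ = (Fintype.card ν : ℂ) • 1) (hB : ∀ a, l2norm (Φ a) ^ 2 ≤ B)
    (hγ : ∀ i, l2norm ((A * Φ.submatrix σ id) i) ^ 2 ≤ γ) (H : Matrix κ κ ℂ) :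
    resampleSum σ (fun τ => ‖(sampledForm A Φ σ - sampledForm A Φ τ) * H‖ ^ 2) ≤
      8 * B * ‖A * Φ.submatrix σ id * H‖ ^ 2 +
        4 * γ * (trace (Hᴴ * shiftedGram Φ σ * H)).re := by
  set g : ι → κ → ℂ := A * Φ.submatrix σ id
  have hterm (i : ι) (a : ν) : ‖(sampledForm A Φ σ -
      sampledForm A Φ (Function.update σ i a)) * H‖ ^ 2 ≤ 8 * B * l2norm (g i ᵥ* H) ^ 2 +
        4 * γ * (l2norm (Φ (σ i) ᵥ* H) ^ 2 + l2norm (Φ a ᵥ* H) ^ 2) := by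
    have hu : l2norm (Φ (σ i) - Φ a) ^ 2 ≤ 4 * B := by
      linarith [l2norm_sub_sq_le (Φ (σ i)) (Φ a), hB (σ i), hB a]
    have huH : l2norm ((Φ (σ i) - Φ a) ᵥ* H) ^ 2 ≤
        2 * (l2norm (Φ (σ i) ᵥ* H) ^ 2 + l2norm (Φ a ᵥ* H) ^ 2) := by
      rw [sub_vecMul]
      exact l2norm_sub_sq_le _ _
    rw [sampledForm_sub_sampledForm_update hA hdiag, Matrix.add_mul]
    refine (norm_add_sq_le _ _).trans ?_
    rw [norm_vecMulVec_mul_sq, norm_vecMulVec_mul_sq, l2norm_star, l2norm_star]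
    have h₁ := mul_le_mul_of_nonneg_right hu (sq_nonneg (l2norm (g i ᵥ* H)))
    have h₂ := mul_le_mul (hγ i) huH (sq_nonneg _) ((sq_nonneg _).trans (hγ i))
    linarith
  calc resampleSum σ (fun τ => ‖(sampledForm A Φ σ - sampledForm A Φ τ) * H‖ ^ 2)
      ≤ ∑ i, 𝔼 a, (8 * B * l2norm (g i ᵥ* H) ^ 2 +
          4 * γ * (l2norm (Φ (σ i) ᵥ* H) ^ 2 + l2norm (Φ a ᵥ* H) ^ 2)) :=
        sum_le_sum fun i _ => expect_le_expect fun a _ => hterm i a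
    _ = 8 * B * ‖A * Φ.submatrix σ id * H‖ ^ 2 +
          4 * γ * (trace (Hᴴ * shiftedGram Φ σ * H)).re := by
        rw [norm_mul_sq_eq_sum, ← sum_expect_l2norm_vecMul_sq hΦ]
        simp only [expect_add_distrib, sum_add_distrib, ← mul_expect, ← mul_sum,
          Fintype.expect_const]
        rfl

lemma norm_mul_sq_le_of_posSemidef {n : Type*} [Fintype n] (hA : A.IsHermitian)
    (hβ : ((2 : ℝ) • A + (4 * β) • (1 : Matrix ι ι ℂ) - A * A).PosSemidef) (W : Matrix ι n ℂ) :
    ‖A * W‖ ^ 2 ≤ 2 * (trace (Wᴴ * A * W)).re + 4 * β * ‖W‖ ^ 2 := by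
  have h := (Complex.le_def.1 (hβ.conjTranspose_mul_mul_same W).trace_nonneg).1
  have hexpand : Wᴴ * ((2 : ℝ) • A + (4 * β) • (1 : Matrix ι ι ℂ) - A * A) * W =
      (2 : ℝ) • (Wᴴ * A * W) + (4 * β) • (Wᴴ * W) - (A * W)ᴴ * (A * W) := by
    rw [conjTranspose_mul, hA.eq]
    simp only [Matrix.mul_sub, Matrix.mul_add, Matrix.sub_mul, Matrix.add_mul, Matrix.mul_smul,
      Matrix.smul_mul, Matrix.mul_one, Matrix.mul_assoc]
  rw [hexpand, trace_sub, trace_add, trace_smul, trace_smul, Complex.sub_re, Complex.add_re,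
    Complex.smul_re, Complex.smul_re, re_trace_conjTranspose_mul_self,
    re_trace_conjTranspose_mul_self, Complex.zero_re, smul_eq_mul, smul_eq_mul] at h
  linarith

end SampledForm

section SampledFormMoments

variable {ι ν κ : Type*} [Fintype ι] [DecidableEq ι] [Fintype ν] [Nonempty ν] [Fintype κ]
  [DecidableEq κ] {A : Matrix ι ι ℂ} {Φ : Matrix ν κ ℂ} {B β : ℝ}

lemma resampleSum_norm_sampledForm_sub_mul_pow_sq_le {γ : ℝ} {σ : ι → ν} (hA : A.IsHermitian)
    (hdiag : ∀ i, A i i = 0) (hβ₀ : 0 ≤ β)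
    (hβ : ((2 : ℝ) • A + (4 * β) • (1 : Matrix ι ι ℂ) - A * A).PosSemidef)
    (hΦ : Φᴴ * Φ = (Fintype.card ν : ℂ) • 1) (hB : ∀ a, l2norm (Φ a) ^ 2 ≤ B)
    (hγ : ∀ i, l2norm ((A * Φ.submatrix σ id) i) ^ 2 ≤ γ) (r : ℕ) :
    resampleSum σ (fun τ =>
        ‖(sampledForm A Φ σ - sampledForm A Φ τ) * sampledForm A Φ σ ^ r‖ ^ 2) ≤
      16 * B * (trace (sampledForm A Φ σ ^ (2 * r + 1))).re +
        (32 * B * β + 4 * γ) * (trace (shiftedGram Φ σ * sampledForm A Φ σ ^ (2 * r))).re := by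
  have hB₀ : 0 ≤ B := (sq_nonneg _).trans (hB (Classical.arbitrary ν))
  set X := sampledForm A Φ σ with hX
  set F := Φ.submatrix σ id
  have hXr : (X ^ r)ᴴ = X ^ r := by rw [conjTranspose_pow, (isHermitian_sampledForm hA Φ σ).eq]
  have hXF : (trace ((F * X ^ r)ᴴ * A * (F * X ^ r))).re = (trace (X ^ (2 * r + 1))).re := by
    have : (F * X ^ r)ᴴ * A * (F * X ^ r) = X ^ r * X * X ^ r := by
      nth_rw 4 [hX]
      simp only [conjTranspose_mul, hXr, sampledForm, Matrix.mul_assoc]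
      rfl
    rw [this, ← pow_succ, ← pow_add, show r + 1 + r = 2 * r + 1 by ring]
  have hZ : (trace ((X ^ r)ᴴ * shiftedGram Φ σ * X ^ r)).re =
      (trace (shiftedGram Φ σ * X ^ (2 * r))).re := by
    rw [Matrix.mul_assoc, trace_mul_comm, hXr, Matrix.mul_assoc, ← pow_add, ← two_mul]
  have hFZ : ‖F * X ^ r‖ ^ 2 ≤ (trace (shiftedGram Φ σ * X ^ (2 * r))).re := by
    rw [← hZ, re_trace_conjTranspose_mul_shiftedGram_mul]
    exact le_add_of_nonneg_right (by positivity)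
  have hAF : ‖A * F * X ^ r‖ ^ 2 ≤ 2 * (trace (X ^ (2 * r + 1))).re +
      4 * β * (trace (shiftedGram Φ σ * X ^ (2 * r))).re := by
    rw [Matrix.mul_assoc]
    refine (norm_mul_sq_le_of_posSemidef hA hβ _).trans ?_
    rw [hXF]
    gcongr
  have hvar := resampleSum_norm_sampledForm_sub_mul_sq_le hA hdiag hΦ hB hγ (X ^ r)
  rw [hZ] at hvar
  linarith [mul_le_mul_of_nonneg_left hAF (by positivity : 0 ≤ 8 * B)]

theorem expect_re_trace_sampledForm_pow_le {γ : (ι → ν) → ℝ} (hA : A.IsHermitian)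
    (hdiag : ∀ i, A i i = 0) (hβ₀ : 0 ≤ β)
    (hβ : ((2 : ℝ) • A + (4 * β) • (1 : Matrix ι ι ℂ) - A * A).PosSemidef)
    (hΦ : Φᴴ * Φ = (Fintype.card ν : ℂ) • 1) (hmean : ∀ t, ∑ a, Φ a t = 0)
    (hB : ∀ a, l2norm (Φ a) ^ 2 ≤ B) (hγ₀ : ∀ σ, 0 ≤ γ σ)
    (hγ : ∀ σ i, l2norm ((A * Φ.submatrix σ id) i) ^ 2 ≤ γ σ) (r : ℕ) :
    𝔼 σ : ι → ν, (trace (sampledForm A Φ σ ^ (2 * r + 2))).re ≤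
      (Fintype.card κ * (16 * (2 * r + 1) * B) ^ (2 * r + 2) +
        𝔼 σ, (4 * (2 * r + 1) * (8 * B * β + γ σ)) ^ (r + 1) *
          (trace (shiftedGram Φ σ ^ (r + 1))).re) / 2 := by
  have hB₀ : 0 ≤ B := (sq_nonneg _).trans (hB (Classical.arbitrary ν))
  set X : (ι → ν) → Matrix κ κ ℂ := sampledForm A Φ
  set Z : (ι → ν) → Matrix κ κ ℂ := shiftedGram Φ
  have hX (σ : ι → ν) : (X σ).IsHermitian := isHermitian_sampledForm hA Φ σ
  have hdrift (σ : ι → ν) : resampleSum σ (fun τ => (trace ((X σ - X τ) * X σ ^ (2 * r + 1))).re) =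
      2 * (trace (X σ ^ (2 * r + 2))).re := by
    rw [resampleSum_re_trace_sampledForm_sub hA hdiag hmean, ← pow_succ']
  have hyoung (σ : ι → ν) :
      (2 * r + 1) * resampleSum σ (fun τ => ‖(X σ - X τ) * X σ ^ r‖ ^ 2) ≤
        Fintype.card κ * (16 * (2 * r + 1) * B) ^ (2 * r + 2) +
          (4 * (2 * r + 1) * (8 * B * β + γ σ)) ^ (r + 1) * (trace (Z σ ^ (r + 1))).re +
            2 * (trace (X σ ^ (2 * r + 2))).re := by
    have hvar := mul_le_mul_of_nonneg_left
      (resampleSum_norm_sampledForm_sub_mul_pow_sq_le hA hdiag hβ₀ hβ hΦ hB (hγ σ) r)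
      (by positivity : (0 : ℝ) ≤ 2 * r + 1)
    have h₁ := mul_re_trace_pow_le (hX σ) (by positivity : 0 ≤ 16 * (2 * r + 1) * B) r
    have h₂ := mul_re_trace_mul_pow_le (posSemidef_shiftedGram Φ σ) (hX σ)
      (by have := hγ₀ σ; positivity : 0 ≤ 4 * (2 * r + 1) * (8 * B * β + γ σ)) r
    linarith
  have hmoment := expect_resampleSum_re_trace_le hX r
  have hsum := expect_le_expect fun σ (_ : σ ∈ univ) => hyoung σ
  simp only [expect_add_distrib, ← mul_expect, Fintype.expect_const] at hsum
  simp only [hdrift, ← mul_expect] at hmoment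
  linarith

end SampledFormMoments

section Moments

variable {ι ν κ : Type*} [Fintype ι]

lemma iSup_pow_le_sum [Nonempty ι] {f : ι → ℝ} (hf : ∀ i, 0 ≤ f i) (n : ℕ) :
    (⨆ i, f i) ^ n ≤ ∑ i, f i ^ n := by
  obtain ⟨j, hj⟩ := exists_eq_ciSup_of_finite (f := f)
  rw [← hj]
  exact single_le_sum (f := fun i => f i ^ n) (fun i _ => pow_nonneg (hf i) n) (mem_univ j)

variable [DecidableEq ι] [Nonempty ι] [Fintype ν] [Nonempty ν] [Fintype κ]
  {A : Matrix ι ι ℂ} {Φ : Matrix ν κ ℂ} {B β : ℝ}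

lemma expect_add_iSup_l2norm_mul_submatrix_pow_le (hAβ : ∀ i, l2norm (A i) ^ 2 ≤ β)
    (hmean : ∀ t, ∑ a, Φ a t = 0) (hB : ∀ a, l2norm (Φ a) ^ 2 ≤ B) {q : ℕ} (hq : q ≠ 0) :
    𝔼 σ : ι → ν, (8 * B * β + ⨆ i, l2norm ((A * Φ.submatrix σ id) i) ^ 2) ^ (2 * q) ≤
      Fintype.card ι * (16 * q * B * β) ^ (2 * q) := by
  have hB₀ : 0 ≤ B := (sq_nonneg _).trans (hB (Classical.arbitrary ν))
  have hβ₀ : 0 ≤ β := (sq_nonneg _).trans (hAβ (Classical.arbitrary ι))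
  have hq₁ : (1 : ℝ) ≤ q := Nat.one_le_cast.2 (Nat.one_le_iff_ne_zero.2 hq)
  have hm₁ : (1 : ℝ) ≤ Fintype.card ι := Nat.one_le_cast.2 Fintype.card_pos
  set γ : (ι → ν) → ℝ := fun σ => ⨆ i, l2norm ((A * Φ.submatrix σ id) i) ^ 2
  have hγ₀ (σ : ι → ν) : 0 ≤ γ σ := Real.iSup_nonneg fun _ => sq_nonneg _
  have hγ : 𝔼 σ, γ σ ^ (2 * q) ≤ Fintype.card ι * (8 * q * B * β) ^ (2 * q) := calc
    𝔼 σ, γ σ ^ (2 * q)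
      ≤ 𝔼 σ : ι → ν, ∑ i, l2norm (A i ᵥ* Φ.submatrix σ id) ^ (2 * (2 * q)) := by
        refine expect_le_expect fun σ _ => (iSup_pow_le_sum (fun _ => sq_nonneg _) _).trans_eq ?_
        simp only [mul_apply_eq_vecMul, ← pow_mul]
    _ ≤ ∑ _i : ι, (8 * q * B * β) ^ (2 * q) := by
        rw [expect_sum_comm]
        refine sum_le_sum fun i _ =>
          (expect_l2norm_vecMul_submatrix_pow_le hmean hB (A i) (2 * q)).trans ?_
        refine pow_le_pow_left₀ (by positivity) ?_ _
        push_cast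
        linarith [mul_le_mul_of_nonneg_left (hAβ i) (by positivity : 0 ≤ 8 * q * B)]
    _ = Fintype.card ι * (8 * q * B * β) ^ (2 * q) := by
        rw [sum_const, card_univ, nsmul_eq_mul]
  have hconst : (8 * B * β) ^ (2 * q) ≤ Fintype.card ι * (8 * q * B * β) ^ (2 * q) := by
    refine (pow_le_pow_left₀ (by positivity) ?_ _).trans (le_mul_of_one_le_left (by positivity) hm₁)
    nlinarith [mul_nonneg hB₀ hβ₀]
  calc 𝔼 σ, (8 * B * β + γ σ) ^ (2 * q)
      ≤ 𝔼 σ, 2 ^ (2 * q - 1) * ((8 * B * β) ^ (2 * q) + γ σ ^ (2 * q)) :=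
        expect_le_expect fun σ _ => add_pow_le (by positivity) (hγ₀ σ) _
    _ = 2 ^ (2 * q - 1) * ((8 * B * β) ^ (2 * q) + 𝔼 σ, γ σ ^ (2 * q)) := by
        rw [← mul_expect, expect_add_distrib, Fintype.expect_const]
    _ ≤ 2 ^ (2 * q - 1) * (2 * (Fintype.card ι * (8 * q * B * β) ^ (2 * q))) := by
        gcongr
        linarith
    _ = Fintype.card ι * (16 * q * B * β) ^ (2 * q) := by
        rw [← mul_assoc, ← pow_succ, Nat.sub_add_cancel (by lia), mul_left_comm, ← mul_pow]
        ring

variable [DecidableEq κ]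

lemma expect_mul_re_trace_shiftedGram_pow_le {a : (ι → ν) → ℝ} {s : ℝ}
    (hΦ : Φᴴ * Φ = (Fintype.card ν : ℂ) • 1) (hB : ∀ a, l2norm (Φ a) ^ 2 ≤ B) {q : ℕ}
    (hq : q ≠ 0) (hs : 0 ≤ s) (ha : 𝔼 σ, a σ ^ (2 * q) ≤ Fintype.card ι * s ^ (2 * q)) :
    𝔼 σ, a σ ^ q * (trace (shiftedGram Φ σ ^ q)).re ≤
      Fintype.card ι * Fintype.card κ * (4 * s * (Fintype.card ι + q * B)) ^ q := by
  have hB₀ : 0 ≤ B := (sq_nonneg _).trans (hB (Classical.arbitrary ν))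
  have hm₁ : (1 : ℝ) ≤ Fintype.card ι := Nat.one_le_cast.2 Fintype.card_pos
  set b : ℝ := 4 * (Fintype.card ι + q * B) with hb
  have htrace : 𝔼 σ : ι → ν, (trace (shiftedGram Φ σ ^ q)).re ^ 2 ≤
      (Fintype.card κ : ℝ) ^ 2 * b ^ (2 * q) := by
    obtain ⟨r, rfl⟩ := Nat.exists_eq_add_one_of_ne_zero hq
    refine (expect_le_expect fun σ _ =>
      re_trace_pow_sq_le (posSemidef_shiftedGram Φ σ).1 (r + 1)).trans ?_
    rw [← mul_expect, sq, mul_assoc, hb]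
    refine mul_le_mul_of_nonneg_left
      ((expect_re_trace_shiftedGram_pow_le hΦ hB r).trans ?_) (by positivity)
    push_cast [mul_add_one]
    gcongr
    linarith
  refine le_of_abs_le (abs_le_of_sq_le_sq ?_ (by positivity))
  calc (𝔼 σ, a σ ^ q * (trace (shiftedGram Φ σ ^ q)).re) ^ 2
      ≤ (𝔼 σ, (a σ ^ q) ^ 2) * 𝔼 σ, (trace (shiftedGram Φ σ ^ q)).re ^ 2 :=
        expect_mul_sq_le_sq_mul_sq _ _ _
    _ ≤ (Fintype.card ι * s ^ (2 * q)) * ((Fintype.card κ : ℝ) ^ 2 * b ^ (2 * q)) := by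
        simp only [← pow_mul, mul_comm q 2]
        gcongr
    _ ≤ (Fintype.card ι) ^ 2 * s ^ (2 * q) * ((Fintype.card κ : ℝ) ^ 2 * b ^ (2 * q)) := by
        gcongr
        exact le_self_pow₀ hm₁ two_ne_zero
    _ = (Fintype.card ι * Fintype.card κ * (4 * s * (Fintype.card ι + q * B)) ^ q) ^ 2 := by
        rw [show 4 * s * (Fintype.card ι + q * B) = s * b by rw [hb]; ring]
        simp only [mul_pow, ← pow_mul]
        ring

theorem expect_re_trace_sampledForm_pow_two_mul_le (hA : A.IsHermitian) (hdiag : ∀ i, A i i = 0)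
    (hAβ : ∀ i, l2norm (A i) ^ 2 ≤ β)
    (hβ : ((2 : ℝ) • A + (4 * β) • (1 : Matrix ι ι ℂ) - A * A).PosSemidef)
    (hΦ : Φᴴ * Φ = (Fintype.card ν : ℂ) • 1) (hmean : ∀ t, ∑ a, Φ a t = 0)
    (hB : ∀ a, l2norm (Φ a) ^ 2 ≤ B) {q : ℕ} (hq : q ≠ 0) :
    𝔼 σ : ι → ν, (trace (sampledForm A Φ σ ^ (2 * q))).re ≤
      (Fintype.card κ * (32 * q * B) ^ (2 * q) + Fintype.card ι * Fintype.card κ *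
        (512 * q ^ 2 * B * β * (Fintype.card ι + q * B)) ^ q) / 2 := by
  have hB₀ : 0 ≤ B := (sq_nonneg _).trans (hB (Classical.arbitrary ν))
  have hβ₀ : 0 ≤ β := (sq_nonneg _).trans (hAβ (Classical.arbitrary ι))
  set γ : (ι → ν) → ℝ := fun σ => ⨆ i, l2norm ((A * Φ.submatrix σ id) i) ^ 2
  have hγ₀ (σ : ι → ν) : 0 ≤ γ σ := Real.iSup_nonneg fun _ => sq_nonneg _
  have hγ (σ : ι → ν) (i : ι) : l2norm ((A * Φ.submatrix σ id) i) ^ 2 ≤ γ σ :=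
    le_ciSup (f := fun i => l2norm ((A * Φ.submatrix σ id) i) ^ 2)
      (Set.finite_range _).bddAbove i
  obtain ⟨r, rfl⟩ := Nat.exists_eq_add_one_of_ne_zero hq
  have hγq : 𝔼 σ, (4 * (2 * r + 1) * (8 * B * β + γ σ)) ^ (2 * (r + 1)) ≤
      Fintype.card ι * (8 * (r + 1) * (16 * (r + 1) * B * β)) ^ (2 * (r + 1)) := by
    have h := expect_add_iSup_l2norm_mul_submatrix_pow_le hAβ hmean hB hq
    simp only [mul_pow _ (8 * B * β + _), ← mul_expect]
    rw [mul_pow (8 * ((r : ℝ) + 1)), mul_left_comm]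
    push_cast at h
    have h₀ := expect_nonneg (s := univ) fun σ _ =>
      pow_nonneg (add_nonneg (by positivity : 0 ≤ 8 * B * β) (hγ₀ σ)) (2 * (r + 1))
    refine mul_le_mul (pow_le_pow_left₀ (by positivity) ?_ _) h h₀ (by positivity)
    linarith
  refine (expect_re_trace_sampledForm_pow_le hA hdiag hβ₀ hβ hΦ hmean hB hγ₀ hγ r).trans ?_
  have hcross : 𝔼 σ, (4 * (2 * r + 1) * (8 * B * β + γ σ)) ^ (r + 1) *
      (trace (shiftedGram Φ σ ^ (r + 1))).re ≤ Fintype.card ι * Fintype.card κ *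
        (512 * ((r + 1 : ℕ) : ℝ) ^ 2 * B * β * (Fintype.card ι + (r + 1 : ℕ) * B)) ^ (r + 1) := by
    refine (expect_mul_re_trace_shiftedGram_pow_le hΦ hB hq (by positivity) hγq).trans_eq ?_
    congr 2
    push_cast
    ring
  have hpow : (16 * (2 * r + 1) * B) ^ (2 * r + 2) ≤
      (32 * ((r + 1 : ℕ) : ℝ) * B) ^ (2 * (r + 1)) := by
    refine pow_le_pow_left₀ (by positivity) ?_ _
    push_cast
    linarith
  gcongr

end Moments

section StarProjection

lemma mul_conjTranspose_apply_self {m n : Type*} [Fintype n] (M : Matrix m n ℂ) (i : m) :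
    (M * Mᴴ) i i = (l2norm (M i) ^ 2 : ℝ) := by
  simp [mul_apply, l2norm_sq, Complex.mul_conj']

lemma isStarProjection_mul_conjTranspose {m n : Type*} [Fintype m] [Fintype n] [DecidableEq n]
    {V : Matrix m n ℂ} (hV : Vᴴ * V = 1) : IsStarProjection (V * Vᴴ) where
  isIdempotentElem := by
    rw [IsIdempotentElem, Matrix.mul_assoc, ← Matrix.mul_assoc Vᴴ, hV, Matrix.one_mul]
  isSelfAdjoint := isHermitian_mul_conjTranspose_self V

variable {ι : Type*} [Fintype ι] {P : Matrix ι ι ℂ}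

lemma apply_self_of_isStarProjection (hP : IsStarProjection P) (i : ι) :
    P i i = (l2norm (P i) ^ 2 : ℝ) := by
  rw [← mul_conjTranspose_apply_self, ← star_eq_conjTranspose, hP.isSelfAdjoint.star_eq,
    hP.isIdempotentElem.eq]

lemma l2norm_sq_le_one_of_isStarProjection (hP : IsStarProjection P) (i : ι) :
    l2norm (P i) ^ 2 ≤ 1 := by
  have hle : (l2norm (P i) ^ 2) ^ 2 ≤ l2norm (P i) ^ 2 := calc
    (l2norm (P i) ^ 2) ^ 2 = ‖P i i‖ ^ 2 := by
        rw [apply_self_of_isStarProjection hP, Complex.norm_real, Real.norm_eq_abs, sq_abs]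
    _ ≤ l2norm (P i) ^ 2 := by
        rw [l2norm_sq]
        exact single_le_sum (f := fun j => ‖P i j‖ ^ 2) (fun j _ => sq_nonneg _) (mem_univ i)
  nlinarith

end StarProjection

section OffDiagonal

variable {ι : Type*} [DecidableEq ι]

/-- The off-diagonal part `M - diag M` of a square matrix. -/
def offDiagPart (M : Matrix ι ι ℂ) : Matrix ι ι ℂ :=
  M - diagonal (fun i => M i i)

lemma offDiagPart_apply_self (M : Matrix ι ι ℂ) (i : ι) : offDiagPart M i i = 0 := by
  simp [offDiagPart]

lemma isHermitian_offDiagPart {M : Matrix ι ι ℂ} (hM : M.IsHermitian) :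
    (offDiagPart M).IsHermitian :=
  hM.sub (isHermitian_diagonal_of_self_adjoint _ (funext fun i => hM.apply i i))

lemma l2norm_offDiagPart_sq_le [Fintype ι] (M : Matrix ι ι ℂ) (i : ι) :
    l2norm (offDiagPart M i) ^ 2 ≤ l2norm (M i) ^ 2 := by
  simp only [l2norm_sq]
  refine sum_le_sum fun j _ => ?_
  rcases eq_or_ne i j with rfl | hij
  · rw [offDiagPart_apply_self, norm_zero, zero_pow two_ne_zero]
    positivity
  · rw [offDiagPart, Matrix.sub_apply, diagonal_apply_ne _ hij, sub_zero]

variable [Fintype ι] {P : Matrix ι ι ℂ}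

-- With `D = diag P`, the matrix is `(P + D)² + (4β - 2D - 2D²)`, and `0 ≤ D ≤ min β 1`.
lemma posSemidef_offDiagPart_of_isStarProjection (hP : IsStarProjection P) {β : ℝ}
    (hβ : ∀ i, l2norm (P i) ^ 2 ≤ β) :
    ((2 : ℝ) • offDiagPart P + (4 * β) • (1 : Matrix ι ι ℂ) -
      offDiagPart P * offDiagPart P).PosSemidef := by
  set d : ι → ℝ := fun i => l2norm (P i) ^ 2
  set D : Matrix ι ι ℂ := diagonal fun i => (d i : ℂ)
  have hA : offDiagPart P = P - D := by
    simp only [offDiagPart, apply_self_of_isStarProjection hP]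
    rfl
  have hD : Dᴴ = D := by simp [D, diagonal_conjTranspose, Pi.star_def]
  have hrest : (4 * β) • (1 : Matrix ι ι ℂ) - (2 : ℝ) • (D + D * D) =
      diagonal fun i => ((4 * β - 2 * (d i + d i * d i) : ℝ) : ℂ) := by
    ext i j
    rcases eq_or_ne i j with rfl | hij
    · simp [D, diagonal_mul_diagonal, mul_add]
    · simp [D, diagonal_mul_diagonal, hij]
  have hsplit : (2 : ℝ) • (P - D) + (4 * β) • (1 : Matrix ι ι ℂ) - (P - D) * (P - D) =
      (P + D)ᴴ * (P + D) + ((4 * β) • (1 : Matrix ι ι ℂ) - (2 : ℝ) • (D + D * D)) := by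
    rw [conjTranspose_add, hD, ← star_eq_conjTranspose, hP.isSelfAdjoint.star_eq]
    simp only [Matrix.sub_mul, Matrix.mul_sub, Matrix.add_mul, Matrix.mul_add,
      hP.isIdempotentElem.eq, two_smul]
    abel
  rw [hA, hsplit, hrest]
  refine (posSemidef_conjTranspose_mul_self _).add (.diagonal fun i => ?_)
  have h₁ : d i ≤ 1 := l2norm_sq_le_one_of_isStarProjection hP i
  have h₂ : d i * d i ≤ d i := mul_le_of_le_one_left (sq_nonneg _) h₁
  exact Complex.zero_le_real.2 (by linarith [hβ i])

end OffDiagonal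

section Conclusion

lemma unifExp_eq_expect {α : Type*} [Fintype α] (f : α → ℝ) : unifExp f = 𝔼 a, f a :=
  (Fintype.expect_eq_sum_div_card f).symm

lemma sampledForm_moment_bound_le {k l m q r₁ r₂ : ℝ} (hk : 0 ≤ k) (hkl : k ≤ l) (hkm : k ≤ m)
    (hm : 1 ≤ m) (hq : 1 ≤ q) (hr₁ : 1 ≤ r₁) (hr₂ : 1 ≤ r₂) (n : ℕ) :
    (k * (32 * q * (r₁ ^ 2 * k)) ^ (2 * n) + m * k *
      (512 * q ^ 2 * (r₁ ^ 2 * k) * (r₂ ^ 2 * l / m) * (m + q * (r₁ ^ 2 * k))) ^ n) / 2 ≤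
        k * m * (1024 * q ^ 3 * r₁ ^ 4 * r₂ ^ 2 * k * l) ^ n := by
  have hl : 0 ≤ l := hk.trans hkl
  have : 0 < m := zero_lt_one.trans_le hm
  have : 0 < q := zero_lt_one.trans_le hq
  set S := 1024 * q ^ 3 * r₁ ^ 4 * r₂ ^ 2 * k * l
  have hfirst : (32 * q * (r₁ ^ 2 * k)) ^ 2 ≤ S := calc
    (32 * q * (r₁ ^ 2 * k)) ^ 2 = 1024 * q ^ 2 * r₁ ^ 4 * 1 * k * k := by ring
    _ ≤ 1024 * q ^ 3 * r₁ ^ 4 * r₂ ^ 2 * k * l := by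
      gcongr
      · norm_num
      · exact one_le_pow₀ hr₂
  have hsum : m + q * (r₁ ^ 2 * k) ≤ 2 * q * r₁ ^ 2 * m := by
    have hone : 1 ≤ q * r₁ ^ 2 := one_le_mul_of_one_le_of_one_le hq (one_le_pow₀ hr₁)
    nlinarith [mul_le_mul_of_nonneg_left hkm (zero_le_one.trans hone)]
  have hsecond : 512 * q ^ 2 * (r₁ ^ 2 * k) * (r₂ ^ 2 * l / m) * (m + q * (r₁ ^ 2 * k)) ≤ S := calc
    512 * q ^ 2 * (r₁ ^ 2 * k) * (r₂ ^ 2 * l / m) * (m + q * (r₁ ^ 2 * k))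
      ≤ 512 * q ^ 2 * (r₁ ^ 2 * k) * (r₂ ^ 2 * l / m) * (2 * q * r₁ ^ 2 * m) := by gcongr
    _ = S := by
      simp only [S]
      field_simp
      ring
  calc (k * (32 * q * (r₁ ^ 2 * k)) ^ (2 * n) + m * k *
      (512 * q ^ 2 * (r₁ ^ 2 * k) * (r₂ ^ 2 * l / m) * (m + q * (r₁ ^ 2 * k))) ^ n) / 2
      ≤ (m * k * S ^ n + m * k * S ^ n) / 2 := by
        rw [pow_mul]
        gcongr
        exact le_mul_of_one_le_left hk hm
    _ = k * m * S ^ n := by ring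

theorem stmt13_general {ι ν κ μ : Type*} [Fintype ι] [DecidableEq ι] [Fintype ν] [Fintype κ]
    [DecidableEq κ] [Fintype μ] [DecidableEq μ] {Φ : Matrix ν κ ℂ} {V : Matrix ι μ ℂ} {r₁ r₂ : ℝ}
    (hkl : Fintype.card κ ≤ Fintype.card μ) (hlm : Fintype.card μ ≤ Fintype.card ι)
    (hΦ : Φᴴ * Φ = (Fintype.card ν : ℂ) • 1) (hmean : ∀ t, ∑ j, Φ j t = 0)
    (hr₁ : 1 ≤ r₁) (hΦrow : ∀ j, l2norm (Φ j) ≤ r₁ * √(Fintype.card κ))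
    (hV : Vᴴ * V = 1) (hr₂ : 1 ≤ r₂)
    (hVrow : ∀ i, l2norm (V i) ≤ r₂ * √(Fintype.card μ / Fintype.card ι)) {q : ℕ} (hq : q ≠ 0) :
    unifExp (fun σ : ι → ν => (trace (((Φ.submatrix σ id)ᴴ *
      (V * Vᴴ - diagonal (fun i => (V * Vᴴ) i i)) * Φ.submatrix σ id) ^ (2 * q))).re) ≤
        Fintype.card κ * Fintype.card ι *
          (1024 * q ^ 3 * r₁ ^ 4 * r₂ ^ 2 * Fintype.card κ * Fintype.card μ) ^ q := by
  rcases isEmpty_or_nonempty κ with hκ | hκ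
  · simp [unifExp, trace]
  have hι : Nonempty ι := Fintype.card_pos_iff.1 (Fintype.card_pos.trans_le (hkl.trans hlm))
  rcases isEmpty_or_nonempty ν with hν | hν
  · simp only [unifExp, univ_eq_empty, sum_empty, zero_div]
    positivity
  have hP := isStarProjection_mul_conjTranspose hV
  have hβ (i : ι) : l2norm ((V * Vᴴ) i) ^ 2 ≤ r₂ ^ 2 * Fintype.card μ / Fintype.card ι := by
    have hdiag := apply_self_of_isStarProjection hP i
    rw [mul_conjTranspose_apply_self] at hdiag
    rw [← Complex.ofReal_injective hdiag]
    refine (pow_le_pow_left₀ (Real.sqrt_nonneg _) (hVrow i) 2).trans_eq ?_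
    rw [mul_pow, Real.sq_sqrt (by positivity), mul_div_assoc]
  have hB (a : ν) : l2norm (Φ a) ^ 2 ≤ r₁ ^ 2 * Fintype.card κ := by
    refine (pow_le_pow_left₀ (Real.sqrt_nonneg _) (hΦrow a) 2).trans_eq ?_
    rw [mul_pow, Real.sq_sqrt (by positivity)]
  rw [unifExp_eq_expect]
  refine (expect_re_trace_sampledForm_pow_two_mul_le (isHermitian_offDiagPart hP.isSelfAdjoint)
    (offDiagPart_apply_self _) (fun i => (l2norm_offDiagPart_sq_le _ i).trans (hβ i))
    (posSemidef_offDiagPart_of_isStarProjection hP hβ) hΦ hmean hB hq).trans ?_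
  exact sampledForm_moment_bound_le (Nat.cast_nonneg _) (mod_cast hkl) (mod_cast hkl.trans hlm)
    (mod_cast Fintype.card_pos) (mod_cast Nat.one_le_iff_ne_zero.2 hq) hr₁ hr₂ q

end Conclusion

end

/-- the Schatten `4p`-norm moment bound
`E ‖F*AF‖_{4p}^{4p} ≤ c^{2p} k m p^{6p} k^{2p} l^{2p} r₁^{8p} r₂^{4p}`, where `A` is the
off-diagonal part of `VV*`.  Since `F*AF` is Hermitian and `4p` is even, its Schatten
`4p`-norm to the power `4p` equals the (real) trace of `(F*AF)^{4p}`. -/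
theorem stmt13 :
    ∃ c : ℝ, 0 < c ∧
      ∀ (N m l k : ℕ) (Φ : Matrix (Fin N) (Fin k) ℂ) (V : Matrix (Fin m) (Fin l) ℂ)
        (r₁ r₂ : ℝ),
        Even m → k ≤ l → l ≤ m →
        Φᴴ * Φ = (N : ℂ) • (1 : Matrix (Fin k) (Fin k) ℂ) →
        (∀ t : Fin k, ∑ j : Fin N, Φ j t = 0) →
        1 ≤ r₁ → (∀ j : Fin N, l2norm (fun t => Φ j t) ≤ r₁ * Real.sqrt k) →
        Vᴴ * V = (1 : Matrix (Fin l) (Fin l) ℂ) →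
        1 ≤ r₂ → (∀ i : Fin m, l2norm (fun t => V i t) ≤ r₂ * Real.sqrt ((l : ℝ) / m)) →
        ∀ p : ℕ, 2 ≤ p →
        unifExp (fun σ : Fin m → Fin N =>
            (Matrix.trace
              (((Φ.submatrix σ id)ᴴ *
                  (V * Vᴴ - Matrix.diagonal (fun i => (V * Vᴴ) i i)) *
                (Φ.submatrix σ id)) ^ (4 * p))).re) ≤
          c ^ (2 * p) * k * m * (p : ℝ) ^ (6 * p) * (k : ℝ) ^ (2 * p) * (l : ℝ) ^ (2 * p) *
            r₁ ^ (8 * p) * r₂ ^ (4 * p) := by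
  refine ⟨8192, by norm_num, ?_⟩
  intro N m l k Φ V r₁ r₂ _ hkl hlm hΦ hmean hr₁ hΦrow hV hr₂ hVrow p hp
  have hmoment := stmt13_general (q := 2 * p) (by simpa using hkl) (by simpa using hlm)
    (by simpa using hΦ) hmean hr₁ (by simpa using hΦrow) hV hr₂ (by simpa using hVrow) (by lia)
  rw [← mul_assoc 2 2 p, Fintype.card_fin, Fintype.card_fin, Fintype.card_fin] at hmoment
  refine hmoment.trans_eq ?_
  rw [show (1024 * ((2 * p : ℕ) : ℝ) ^ 3 * r₁ ^ 4 * r₂ ^ 2 * k * l) =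
    8192 * p ^ 3 * k * l * r₁ ^ 4 * r₂ ^ 2 by push_cast; ring]
  simp only [mul_pow, ← pow_mul]
  ring
end
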